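/- arXiv:2102.04200 — 6 statements merged into one kernel-verified Lean document; each statement's English description precedes it below -/
import Mathlib

section
/- Let X be an integer-valued random variable with finite variance σ² > 0. Then H(X) < (1/2) ln(2πeσ²) + 2/(e^{2π²σ²} − 1). -/
open MeasureTheory Real

/-!
Compare `p` with the Gaussian of the same mean and variance restricted to the integers. With
`w k = exp (-(k - μ)² / (2σ²))` and `Z = ∑ w k`, Gibbs' inequality gives
`H(X) ≤ log Z + E[(X - μ)²] / (2σ²) = log Z + 1/2` (`entropy_le_log_partition`).
By Poisson summation `Z = √(2πσ²) ∑ exp (-2π²σ²n² + 2πiμn)`, and since `n² ≥ |n|`, the theta series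
is dominated in absolute value by the two-sided geometric series of ratio `q = exp (-2π²σ²)`, whose
sum is `1 + 2/(q⁻¹ - 1)` (`gaussian_sum_le`). The strict inequality is `log (1 + x) < x`.
-/

lemma hasSum_pow_natAbs {q : ℝ} (h0 : 0 ≤ q) (h1 : q < 1) :
    HasSum (fun n : ℤ => q ^ n.natAbs) ((1 - q)⁻¹ + (1 - q)⁻¹ * q) := by
  refine HasSum.of_nat_of_neg_add_one ?_ ?_
  · simpa using hasSum_geometric_of_lt_one h0 h1
  · have h : ∀ n : ℕ, (-((n : ℤ) + 1)).natAbs = n + 1 := fun n => by omega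
    simpa only [h, pow_succ] using (hasSum_geometric_of_lt_one h0 h1).mul_right q

lemma exp_neg_lt_one {c : ℝ} (hc : 0 < c) : Real.exp (-c) < 1 := by
  rw [Real.exp_lt_one_iff]; linarith

lemma summable_gaussian (μ : ℝ) {c : ℝ} (hc : 0 < c) :
    Summable (fun k : ℤ => Real.exp (-c * ((k : ℝ) - μ) ^ 2)) := by
  have hs := (hasSum_pow_natAbs (Real.exp_pos (-(2 * c))).le
    (exp_neg_lt_one (by linarith : 0 < 2 * c))).summable.mul_left (Real.exp (c * (2 * |μ| + 1)))
  refine Summable.of_nonneg_of_le (fun _ => (Real.exp_pos _).le) (fun k => ?_) hs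
  rw [← Real.exp_nat_mul, ← Real.exp_add, Real.exp_le_exp, Nat.cast_natAbs, Int.cast_abs]
  -- `(k - μ)² ≥ 2|k - μ| - 1 ≥ 2|k| - 2|μ| - 1`
  have h1 : |(k : ℝ)| - |μ| ≤ |(k : ℝ) - μ| := abs_sub_abs_le_abs_sub _ _
  have h2 : 2 * |(k : ℝ) - μ| - 1 ≤ ((k : ℝ) - μ) ^ 2 := by
    rw [← sq_abs]; nlinarith [sq_nonneg (|(k : ℝ) - μ| - 1)]
  nlinarith [mul_le_mul_of_nonneg_left (by linarith :
    2 * |(k : ℝ)| - 2 * |μ| - 1 ≤ ((k : ℝ) - μ) ^ 2) hc.le]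

/-- The bound on the discrete Gaussian partition function, by Poisson summation. -/
lemma gaussian_sum_le (μ : ℝ) {s : ℝ} (hs : 0 < s) :
    ∑' k : ℤ, Real.exp (-(1 / (2 * s)) * ((k : ℝ) - μ) ^ 2) ≤
      (2 * π * s) ^ (1 / 2 : ℝ) * (1 + 2 / (Real.exp (2 * π ^ 2 * s) - 1)) := by
  have ha : 0 < 2 * π * s := by positivity
  have hc : 0 < 2 * π ^ 2 * s := by positivity
  set q := Real.exp (-(2 * π ^ 2 * s)) with hq
  have hq0 : 0 < q := Real.exp_pos _
  have hq1 : q < 1 := exp_neg_lt_one hc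
  have hgeo := hasSum_pow_natAbs hq0.le hq1
  have hP := Complex.tsum_exp_neg_quadratic (a := ((2 * π * s : ℝ) : ℂ))
    (by rw [Complex.ofReal_re]; exact ha) (Complex.I * μ)
  have hR : ∀ n : ℤ, Complex.exp (-π / ((2 * π * s : ℝ) : ℂ) *
      ((n : ℂ) + Complex.I * (Complex.I * μ)) ^ 2) =
      ((Real.exp (-(1 / (2 * s)) * ((n : ℝ) - μ) ^ 2) : ℝ) : ℂ) := by
    intro n
    push_cast
    congr 1
    have h1 : (s : ℂ) ≠ 0 := by exact_mod_cast hs.ne'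
    have h2 : (π : ℂ) ≠ 0 := by exact_mod_cast Real.pi_ne_zero
    rw [← mul_assoc, Complex.I_mul_I]
    field_simp
    ring
  have hroot : (((2 * π * s : ℝ) : ℂ)) ^ (1 / 2 : ℂ) =
      (((2 * π * s) ^ (1 / 2 : ℝ) : ℝ) : ℂ) := by
    rw [Complex.ofReal_cpow ha.le]; norm_num
  have hr0 : 0 < (2 * π * s) ^ (1 / 2 : ℝ) := Real.rpow_pos_of_pos ha _
  simp_rw [hR] at hP
  rw [hroot, ← Complex.ofReal_tsum] at hP
  set Z := ∑' k : ℤ, Real.exp (-(1 / (2 * s)) * ((k : ℝ) - μ) ^ 2) with hZ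
  have hZ0 : 0 ≤ Z := tsum_nonneg fun _ => (Real.exp_pos _).le
  have hterm : ∀ n : ℤ, ‖Complex.exp (-π * ((2 * π * s : ℝ) : ℂ) * (n : ℂ) ^ 2 +
      2 * π * (Complex.I * μ) * n)‖ ≤ q ^ n.natAbs := by
    intro n
    have hre : (-π * ((2 * π * s : ℝ) : ℂ) * (n : ℂ) ^ 2 + 2 * π * (Complex.I * μ) * n) =
      ((-(2 * π ^ 2 * s) * (n : ℝ) ^ 2 : ℝ) : ℂ) + ((2 * π * μ * n : ℝ) : ℂ) * Complex.I := by
      push_cast; ring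
    rw [hre, Complex.norm_exp, Complex.add_re, Complex.ofReal_re, Complex.re_ofReal_mul,
      Complex.I_re, mul_zero, add_zero, hq, ← Real.exp_nat_mul, Real.exp_le_exp,
      Nat.cast_natAbs]
    have h : ((|n| : ℤ) : ℝ) ≤ (n : ℝ) ^ 2 := by
      have : |n| ≤ n ^ 2 := by
        rw [← Int.natCast_natAbs, ← Int.natAbs_sq]; exact_mod_cast Nat.le_self_pow two_ne_zero _
      exact_mod_cast this
    nlinarith
  have hle := tsum_of_norm_bounded hgeo hterm
  rw [hP, ← Complex.ofReal_one, ← Complex.ofReal_div, ← Complex.ofReal_mul, Complex.norm_real,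
    Real.norm_of_nonneg (by positivity), one_div, inv_mul_le_iff₀ hr0] at hle
  refine hle.trans_eq ?_
  have he : Real.exp (2 * π ^ 2 * s) = q⁻¹ := by rw [hq, Real.exp_neg, inv_inv]
  have h1q : 1 - q ≠ 0 := by linarith
  rw [he]
  congr 1
  have : q⁻¹ - 1 = (1 - q) / q := by field_simp
  rw [this]
  field_simp
  ring

/-- Gibbs' inequality against the probability weights `exp (-V k) / ∑ exp (-V j)`. No summability of
the entropy series is assumed: its terms are nonnegative and the pointwise bound used is summable. -/
lemma entropy_le_log_partition {p V : ℤ → ℝ} (hp0 : ∀ k, 0 ≤ p k) (hp : HasSum p 1)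
    {E : ℝ} (hE : HasSum (fun k => V k * p k) E) (hV : Summable fun k => Real.exp (-V k)) :
    ∑' k, p k * Real.log (1 / p k) ≤ Real.log (∑' k, Real.exp (-V k)) + E := by
  set Z := ∑' k, Real.exp (-V k) with hZ
  have hZ0 : 0 < Z := hV.tsum_pos (fun _ => (Real.exp_pos _).le) 0 (Real.exp_pos _)
  have hg : HasSum (fun k => Real.exp (-V k) / Z) 1 := by
    simpa [← hZ, hZ0.ne'] using hV.hasSum.div_const Z
  have hbound : HasSum (fun k => Real.exp (-V k) / Z - p k + p k * Real.log Z + V k * p k)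
      (Real.log Z + E) := by
    simpa using ((hg.sub hp).add (hp.mul_right (Real.log Z))).add hE
  have hle : ∀ k, p k * Real.log (1 / p k) ≤
      Real.exp (-V k) / Z - p k + p k * Real.log Z + V k * p k := by
    intro k
    rcases (hp0 k).eq_or_lt with h | h
    · rw [← h]; simp; positivity
    · have h1 := Real.log_le_sub_one_of_pos (x := Real.exp (-V k) / Z / p k) (by positivity)
      rw [Real.log_div (by positivity) h.ne', Real.log_div (by positivity) hZ0.ne',
        Real.log_exp] at h1
      have h2 := mul_le_mul_of_nonneg_left h1 h.le
      have h3 : p k * (Real.exp (-V k) / Z / p k - 1) = Real.exp (-V k) / Z - p k := by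
        field_simp
      rw [h3] at h2
      rw [one_div, Real.log_inv]
      linarith
  have hp_le : ∀ k, p k ≤ 1 := fun k => le_hasSum hp k fun j _ => hp0 j
  have hnn : ∀ k, 0 ≤ p k * Real.log (1 / p k) := by
    intro k
    rw [one_div, Real.log_inv]
    exact mul_nonneg (hp0 k) (neg_nonneg.2 (Real.log_nonpos (hp0 k) (hp_le k)))
  rw [← hbound.tsum_eq]
  exact (Summable.of_nonneg_of_le hnn hle hbound.summable).tsum_le_tsum hle hbound.summable

/-- Improved Massey inequality: if `X` is integer-valued with finite variance `σ² > 0`,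
then `H(X) < (1/2) ln(2πeσ²) + 2/(e^{2π²σ²} - 1)`. -/
theorem improved_massey_inequality
    (p : ℤ → ℝ) (hp0 : ∀ k, 0 ≤ p k) (hp1 : ∑' k, p k = 1)
    (μ : ℝ) (hμ : μ = ∑' k : ℤ, (k : ℝ) * p k)
    (hμs : Summable (fun k : ℤ => (k : ℝ) * p k))
    (σ2 : ℝ) (hσ2 : σ2 = ∑' k : ℤ, ((k : ℝ) - μ) ^ 2 * p k)
    (hσ2s : Summable (fun k : ℤ => ((k : ℝ) - μ) ^ 2 * p k)) (hσ2pos : 0 < σ2) :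
    (∑' k, p k * Real.log (1 / p k)) <
      (1 / 2) * Real.log (2 * π * Real.exp 1 * σ2)
        + 2 / (Real.exp (2 * π ^ 2 * σ2) - 1) := by
  -- a non-summable `p` would have `tsum` equal to `0`
  have hps : Summable p := by
    by_contra h
    rw [tsum_eq_zero_of_not_summable h] at hp1
    exact zero_ne_one hp1
  have hp : HasSum p 1 := hp1 ▸ hps.hasSum
  have hE : HasSum (fun k : ℤ => (1 / (2 * σ2) * ((k : ℝ) - μ) ^ 2) * p k) (1 / 2) := by
    have h := (hσ2 ▸ hσ2s.hasSum : HasSum _ σ2).mul_left (1 / (2 * σ2))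
    have h2 : 1 / (2 * σ2) * σ2 = 1 / 2 := by field_simp
    rw [h2] at h
    simpa only [mul_assoc] using h
  have hV := summable_gaussian μ (c := 1 / (2 * σ2)) (by positivity)
  have hZ0 := hV.tsum_pos (fun _ => (Real.exp_pos _).le) 0 (Real.exp_pos _)
  have hent := entropy_le_log_partition hp0 hp hE (by simpa only [neg_mul] using hV)
  simp only [← neg_mul] at hent
  have ha : 0 < 2 * π * σ2 := by positivity
  have hx : 0 < 2 / (Real.exp (2 * π ^ 2 * σ2) - 1) :=
    div_pos two_pos (sub_pos.2 (Real.one_lt_exp_iff.2 (by positivity)))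
  have hlogZ := Real.log_le_log hZ0 (gaussian_sum_le μ hσ2pos)
  rw [Real.log_mul (Real.rpow_pos_of_pos ha _).ne' (by positivity), Real.log_rpow ha] at hlogZ
  have hlt := Real.log_lt_sub_one_of_pos
    (x := 1 + 2 / (Real.exp (2 * π ^ 2 * σ2) - 1)) (by positivity) (by linarith)
  have hsplit : Real.log (2 * π * Real.exp 1 * σ2) = Real.log (2 * π * σ2) + 1 := by
    rw [show 2 * π * Real.exp 1 * σ2 = 2 * π * σ2 * Real.exp 1 by ring,
      Real.log_mul ha.ne' (Real.exp_pos _).ne', Real.log_exp]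
  rw [hsplit]
  linarith
end

section
/- For every constant c < 2π there exists σ₀ > 0 such that the following holds: if X is a random variable taking values in the nonnegative integers with finite mean μ and finite variance σ² satisfying μ ≤ c·σ² and σ² ≥ σ₀, then H(X) < (1/2) ln(2πeσ²). -/
/-!
The Gibbs inequality compares `p` with the sub-probability weights obtained by restricting the
Gaussian density `exp (-(x - μ)² / (2σ²)) / √(2πσ²)` to the nonnegative integers: if these weights
have total mass less than `1`, then `H(X) < (1/2) ln (2πeσ²)` (`entropy_lt_of_mass_lt_one`).

The total mass over all of `ℤ` is given by Poisson summation, here in the form of the functional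
equation between Mathlib's `evenKernel` and `cosKernel`; it exceeds `1` by at most `4 exp (-2π²σ²)`.
The nonnegative integers miss at least the mass at `-1`, which is
`exp (-(μ + 1)² / (2σ²)) / √(2πσ²)`. Since `μ ≤ cσ²`, this is of order
`exp (-c²σ² / 2) / √(2πσ²)`, and because `c < 2π` it beats the Poisson excess for large `σ²`
(`eventually_excess_lt`).
-/

open MeasureTheory Real
open Filter Topology HurwitzZeta

/-- Only the frequencies `k ≠ 0` of the cosine series contribute to the left side. Bounding
cosines by `1` and `k²` by `k` leaves a geometric series; `1 ≤ π * s` makes its ratio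
at most `1 / 2`. -/
lemma cosKernel_sub_one_le (a : ℝ) {s : ℝ} (hs : 1 ≤ π * s) :
    cosKernel a s - 1 ≤ 4 * exp (-(π * s)) := by
  have hs0 : 0 < s := by
    by_contra h
    nlinarith [pi_pos, mul_nonneg pi_pos.le (neg_nonneg.2 (not_lt.1 h))]
  set r : ℝ := exp (-(π * s)) with hr
  have hr0 : 0 < r := exp_pos _
  have hr2 : r ≤ 1 / 2 := by
    have h1 : (2 : ℝ) ≤ exp (π * s) := by linarith [add_one_le_exp (π * s)]
    rw [hr, exp_neg, one_div]
    exact inv_anti₀ two_pos h1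
  have hgeom : HasSum (fun n : ℕ => 2 * r * r ^ n) (2 * r * (1 - r)⁻¹) :=
    (hasSum_geometric_of_lt_one hr0.le (by linarith)).mul_left (2 * r)
  have hle : cosKernel a s - 1 ≤ 2 * r * (1 - r)⁻¹ := by
    refine hasSum_le (fun n => ?_) (hasSum_nat_cosKernel₀ a hs0) hgeom
    have h1 : exp (-π * ((n : ℝ) + 1) ^ 2 * s) ≤ r * r ^ n := by
      rw [← pow_succ', hr, ← exp_nat_mul]
      apply exp_le_exp.2
      push_cast
      have : (0 : ℝ) ≤ π * s * ((n + 1) * n) := by positivity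
      nlinarith
    have h2 := cos_le_one (2 * π * a * ((n : ℝ) + 1))
    have h3 := exp_pos (-π * ((n : ℝ) + 1) ^ 2 * s)
    nlinarith
  have hinv : (1 - r)⁻¹ ≤ 2 := by
    rw [show (2 : ℝ) = (1 / 2)⁻¹ by norm_num]
    exact inv_anti₀ (by norm_num) (by linarith)
  nlinarith

/-- The Gaussian weights on the nonnegative integers, together with the weight at `-1`, are bounded
by the Poisson estimate for the sum over all integers. -/
lemma gaussian_nat_sum_le (μ : ℝ) {v : ℝ} (hv : 1 ≤ v) :
    Summable (fun n : ℕ => exp (-((n : ℝ) - μ) ^ 2 / (2 * v))) ∧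
    (∑' n : ℕ, exp (-((n : ℝ) - μ) ^ 2 / (2 * v))) + exp (-(μ + 1) ^ 2 / (2 * v)) ≤
      √(2 * π * v) * (1 + 4 * exp (-(2 * π ^ 2 * v))) := by
  have hv0 : 0 < v := by linarith
  have hs0 : 0 < 2 * π * v := by positivity
  set g : ℤ → ℝ := fun n => exp (-((n : ℝ) - μ) ^ 2 / (2 * v)) with hg
  have hg0 : ∀ n, 0 ≤ g n := fun n => (exp_pos _).le
  have hsum : HasSum g (evenKernel ((-μ : ℝ) : UnitAddCircle) (1 / (2 * π * v))) := by
    convert hasSum_int_evenKernel (-μ) (one_div_pos.2 hs0) using 2 with n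
    simp only [hg, exp_eq_exp]
    field_simp
    ring
  have hfe : evenKernel ((-μ : ℝ) : UnitAddCircle) (1 / (2 * π * v)) =
      √(2 * π * v) * cosKernel ((-μ : ℝ) : UnitAddCircle) (2 * π * v) := by
    rw [evenKernel_functional_equation, one_div_one_div, one_div (2 * π * v),
      inv_rpow hs0.le, one_div, inv_inv, ← sqrt_eq_rpow]
  have hcos := cosKernel_sub_one_le (-μ) (s := 2 * π * v) (by nlinarith [pi_gt_three])
  have hS1 : Summable (fun n : ℕ => g n) :=
    hsum.summable.comp_injective Nat.cast_injective
  have hS2 : Summable (fun n : ℕ => g (-(n + 1))) :=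
    hsum.summable.comp_injective (i := fun n : ℕ => (-(n + 1) : ℤ)) (fun a b h => by
      simpa using h)
  have hsplit := tsum_of_nat_of_neg_add_one hS1 hS2
  rw [hsum.tsum_eq, hfe] at hsplit
  have hfirst : g (-1) ≤ ∑' n : ℕ, g (-(n + 1)) := by
    simpa using hS2.le_tsum 0 (fun n _ => hg0 _)
  have hgm : g (-1) = exp (-(μ + 1) ^ 2 / (2 * v)) := by
    simp only [hg]
    congr 1
    push_cast
    ring
  have hbound : √(2 * π * v) * cosKernel ((-μ : ℝ) : UnitAddCircle) (2 * π * v) ≤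
      √(2 * π * v) * (1 + 4 * exp (-(2 * π ^ 2 * v))) := by
    apply mul_le_mul_of_nonneg_left _ (sqrt_nonneg _)
    rw [show 2 * π ^ 2 * v = π * (2 * π * v) by ring]
    linarith
  refine ⟨by simpa [hg] using hS1, ?_⟩
  have : (∑' n : ℕ, exp (-((n : ℝ) - μ) ^ 2 / (2 * v))) = ∑' n : ℕ, g n := by simp [hg]
  rw [this, ← hgm]
  linarith

/-- For large variance the Poisson excess is smaller than the Gaussian weight at `-1`, even when the
mean is as large as `c * v`. -/
lemma eventually_excess_lt {c : ℝ} (hc0 : 0 ≤ c) (hc : c < 2 * π) :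
    ∀ᶠ v : ℝ in atTop,
      √(2 * π * v) * (4 * exp (-(2 * π ^ 2 * v))) < exp (-(c * v + 1) ^ 2 / (2 * v)) := by
  have hd : 0 < 2 * π ^ 2 - c ^ 2 / 2 := by nlinarith
  have hlim := (tendsto_rpow_mul_exp_neg_mul_atTop_nhds_zero (1 / 2) _ hd).const_mul
    (4 * √(2 * π))
  rw [mul_zero] at hlim
  filter_upwards [hlim.eventually (gt_mem_nhds (exp_pos (-c - 1 / 2))), eventually_ge_atTop 1]
    with v hv hv1
  have hv0 : 0 < v := by linarith
  rw [← sqrt_eq_rpow] at hv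
  have h1 : exp (-(c ^ 2 / 2 * v) + (-c - 1 / 2)) ≤ exp (-(c * v + 1) ^ 2 / (2 * v)) := by
    apply exp_le_exp.2
    rw [le_div_iff₀ (by positivity)]
    nlinarith
  refine lt_of_lt_of_le ?_ h1
  rw [exp_add, sqrt_mul (by positivity),
    show -(2 * π ^ 2 * v) = -(c ^ 2 / 2 * v) + -(2 * π ^ 2 - c ^ 2 / 2) * v by ring, exp_add]
  have := mul_lt_mul_of_pos_left hv (exp_pos (-(c ^ 2 / 2 * v)))
  linarith

/-- The Gibbs inequality against Gaussian weights of total mass less than `1`. -/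
lemma entropy_lt_of_mass_lt_one {p : ℕ → ℝ} (hp : ∀ n, 0 ≤ p n) (hp1 : ∑' n, p n = 1)
    {μ v : ℝ} (hv : 1 ≤ v) (hvar : v = ∑' n : ℕ, ((n : ℝ) - μ) ^ 2 * p n)
    (hvs : Summable (fun n : ℕ => ((n : ℝ) - μ) ^ 2 * p n))
    (hgs : Summable (fun n : ℕ => exp (-((n : ℝ) - μ) ^ 2 / (2 * v))))
    (hmass : ∑' n : ℕ, exp (-((n : ℝ) - μ) ^ 2 / (2 * v)) < √(2 * π * v)) :
    (∑' n, p n * log (1 / p n)) < (1 / 2) * log (2 * π * exp 1 * v) := by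
  have hv0 : 0 < v := by linarith
  have hs0 : 0 < 2 * π * v := by positivity
  have hs1 : 1 < 2 * π * v := by nlinarith [pi_gt_three]
  have hL : (1 / 2) * log (2 * π * exp 1 * v) = 1 / 2 + log √(2 * π * v) := by
    rw [show 2 * π * exp 1 * v = exp 1 * (2 * π * v) by ring,
      log_mul (exp_pos _).ne' hs0.ne', log_exp, log_sqrt hs0.le]
    ring
  rw [hL]
  set Z := √(2 * π * v) with hZ
  have hZ0 : 0 < Z := sqrt_pos.2 hs0
  by_cases hH : Summable (fun n => p n * log (1 / p n))
  · have hps : Summable p := by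
      by_contra h
      rw [tsum_eq_zero_of_not_summable h] at hp1
      exact zero_ne_one hp1
    set g : ℕ → ℝ := fun n => exp (-((n : ℝ) - μ) ^ 2 / (2 * v)) with hg
    -- `log (q / p) ≤ q / p - 1` with `q = g / Z`, multiplied by `p`.
    have hterm : ∀ n, p n * log (1 / p n) ≤
        (1 / (2 * v)) * (((n : ℝ) - μ) ^ 2 * p n) + log Z * p n + (Z⁻¹ * g n - p n) := by
      intro n
      have hgn : 0 < g n := exp_pos _
      rcases (hp n).eq_or_lt with h | h
      · rw [← h]
        simp only [zero_mul, mul_zero, zero_add, sub_zero]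
        positivity
      · have hlog := log_le_sub_one_of_pos (show 0 < Z⁻¹ * g n / p n by positivity)
        rw [log_div (by positivity) h.ne', log_mul (by positivity) hgn.ne', log_inv] at hlog
        have hlg : log (g n) = -((n : ℝ) - μ) ^ 2 / (2 * v) := log_exp _
        rw [hlg] at hlog
        have h2 := mul_le_mul_of_nonneg_left hlog h.le
        have h3 : p n * (Z⁻¹ * g n / p n - 1) = Z⁻¹ * g n - p n := by field_simp
        rw [h3] at h2
        rw [one_div (p n), log_inv]
        have h4 : p n * (-((n : ℝ) - μ) ^ 2 / (2 * v)) =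
            -((1 / (2 * v)) * (((n : ℝ) - μ) ^ 2 * p n)) := by ring
        linarith
    have hP : HasSum p 1 := hp1 ▸ hps.hasSum
    have hV : HasSum (fun n : ℕ => ((n : ℝ) - μ) ^ 2 * p n) v := by
      have := hvs.hasSum
      rwa [← hvar] at this
    have hle := hasSum_le hterm hH.hasSum
      (((hV.mul_left (1 / (2 * v))).add (hP.mul_left (log Z))).add
        ((hgs.hasSum.mul_left Z⁻¹).sub hP))
    have h5 : Z⁻¹ * ∑' n, g n < 1 := by
      rw [inv_mul_lt_iff₀ hZ0, mul_one]
      exact hmass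
    have h6 : 1 / (2 * v) * v = 1 / 2 := by field_simp
    linarith
  · -- A divergent series has `tsum` zero, while the right side is positive.
    rw [tsum_eq_zero_of_not_summable hH]
    have : 0 ≤ log Z := log_nonneg (one_le_sqrt.2 hs1.le)
    linarith

/-- For every constant `c < 2π` there is `σ₀ > 0` such that every random variable `X`
taking values in the nonnegative integers with finite mean `μ` and finite variance `σ²`
satisfying `μ ≤ cσ²` and `σ² ≥ σ₀` has `H(X) < (1/2) ln(2πeσ²)`. -/
theorem entropy_lt_gaussian_entropy
    (c : ℝ) (hc : c < 2 * π) :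
    ∃ σ₀ > (0 : ℝ), ∀ (p : ℕ → ℝ), (∀ n, 0 ≤ p n) → (∑' n, p n) = 1 →
      ∀ μ σ2 : ℝ, μ = ∑' n : ℕ, (n : ℝ) * p n →
        Summable (fun n : ℕ => (n : ℝ) * p n) →
        σ2 = ∑' n : ℕ, ((n : ℝ) - μ) ^ 2 * p n →
        Summable (fun n : ℕ => ((n : ℝ) - μ) ^ 2 * p n) →
        μ ≤ c * σ2 → σ₀ ≤ σ2 →
        (∑' n, p n * Real.log (1 / p n)) <
          (1 / 2) * Real.log (2 * π * Real.exp 1 * σ2) := by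
  -- A negative `c` is replaced by `0`, so that squaring preserves the bound on the mean.
  obtain ⟨N, hN⟩ := eventually_atTop.1
    (eventually_excess_lt (le_max_right c 0) (max_lt hc two_pi_pos))
  refine ⟨max N 1, by positivity, ?_⟩
  intro p hp hp1 μ v hμ _ hvar hvs hmean hv
  have hv1 : 1 ≤ v := (le_max_right _ _).trans hv
  have hv0 : 0 < v := by linarith
  have hμ0 : 0 ≤ μ := by
    rw [hμ]
    exact tsum_nonneg fun n => mul_nonneg n.cast_nonneg (hp n)
  have hμc : μ ≤ max c 0 * v :=
    hmean.trans (mul_le_mul_of_nonneg_right (le_max_left _ _) hv0.le)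
  obtain ⟨hgs, hle⟩ := gaussian_nat_sum_le μ hv1
  refine entropy_lt_of_mass_lt_one hp hp1 hv1 hvar hvs hgs ?_
  have hlt := hN v ((le_max_left _ _).trans hv)
  have hexp : exp (-(max c 0 * v + 1) ^ 2 / (2 * v)) ≤ exp (-(μ + 1) ^ 2 / (2 * v)) := by
    apply exp_le_exp.2
    apply div_le_div_of_nonneg_right _ (by positivity)
    nlinarith
  linarith
end

section
/- Let X be an integer-valued random variable with finite variance σ² > 0 and finite Rényi entropies of orders 1/2 and 2/3. Then H_{1/2}(X) < ln(2πσ) + 2/(e^{2πσ} − 1), and H_{2/3}(X) < ln( 8πσ/(3√3) ) + 4(1 + πσ)/(e^{2πσ} − 1). -/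
open MeasureTheory Real

/-!
Put `w k = (k - μ)² + s²`. Hölder's inequality applied to `p ^ α = (w p) ^ α * w ^ (-α)` with
`α = m / (m + 1)` gives `H_α ≤ ln ((σ² + s²) ^ m * ∑ w⁻ᵐ)` (`renyi_le`); here `m = 1, 2` are the
orders `1/2` and `2/3`.

The lattice sums `∑ w⁻¹` and `∑ w⁻²` are controlled by complex analysis at `z = -μ + i s`, with
`q = exp (2πiz)` and `|q| = exp (-2πs)`. Since `Im (1 / (z + k)) = -s / w k`, the first sum is read
off from the partial fraction expansion of `π cot (πz)` and its closed form in `q`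
(`cauchySum_le`). Since `Re (1 / (z + k)²) = 1 / w k - 2 s² / (w k)²`, the second follows from the
first and from Lipschitz' formula `∑ 1 / (z + k)² = -4π² q / (1 - q)²` (`cauchySqSum_le`).
In both cases the bound is the integral `∫ (x² + s²)⁻ᵐ dx` times `1 + (exponentially small)`.

The choices `s = σ` for `m = 1` and `s = √3 σ` for `m = 2` minimise the leading factor, and
`ln (1 + x) < x` for `x > 0` gives the strict inequalities. For `m = 2` the correction term comes
out in terms of `exp (2π√3σ)`; `correction_le` replaces it by the stated one.
-/

/-- The sum is absolutely convergent because its terms are the norms of the terms of the Eisenstein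
series `∑ (z + k) ^ (-2m)` at `z = -μ + i s`. -/
lemma cauchySum_summable (μ s : ℝ) (m : ℕ) (hm : 1 ≤ m) :
    Summable fun k : ℤ => ((((k : ℝ) - μ) ^ 2 + s ^ 2) ^ m)⁻¹ := by
  have h := (EisensteinSeries.linear_right_summable (⟨-μ, s⟩ : ℂ) 1
    (k := ((2 * m : ℕ) : ℤ)) (by omega)).norm
  refine h.congr fun k => ?_
  rw [norm_inv, zpow_natCast, norm_pow, pow_mul, ← Complex.normSq_eq_norm_sq,
    Complex.normSq_apply]
  simp
  ring

lemma norm_nome (μ s : ℝ) :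
    ‖Complex.exp (2 * π * Complex.I * (⟨-μ, s⟩ : ℂ))‖ = (exp (2 * π * s))⁻¹ := by
  rw [Complex.norm_exp, ← Real.exp_neg]
  simp

/-- The right-hand side is `(π / s) coth (πs)`, the value of the sum for `μ` an integer, which is
its maximum over `μ`. -/
lemma cauchySum_le (μ s : ℝ) (hs : 0 < s) :
    ∑' k : ℤ, (((k : ℝ) - μ) ^ 2 + s ^ 2)⁻¹ ≤ π / s * (1 + 2 / (exp (2 * π * s) - 1)) := by
  set z : UpperHalfPlane := ⟨⟨-μ, s⟩, hs⟩ with hz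
  have hzim : (z : ℂ).im = s := rfl
  have hzre : (z : ℂ).re = -μ := rfl
  have hE : 1 < exp (2 * π * s) := Real.one_lt_exp_iff.2 (by positivity)
  set f : ℤ → ℝ := fun k => (1 / ((z : ℂ) + k)).im with hf
  have hfk : ∀ k : ℤ, f k = -s * (((k : ℝ) - μ) ^ 2 + s ^ 2)⁻¹ := by
    intro k
    simp only [hf, one_div, Complex.inv_im, Complex.normSq_apply, Complex.add_re, Complex.add_im,
      hzim, hzre, Complex.intCast_re, Complex.intCast_im]
    rw [div_eq_mul_inv]
    congr 2
    · ring
    · ring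
  have hsum : Summable f := by
    have := (cauchySum_summable μ s 1 le_rfl).mul_left (-s)
    exact this.congr fun k => by rw [hfk, pow_one]
  have hmem := UpperHalfPlane.coe_mem_integerComplement z
  have hcot := cot_series_rep' hmem
  have him := Complex.im_tsum (summable_cotTerm hmem)
  have h1 : Summable fun n : ℕ => f ((n : ℤ) + 1) :=
    hsum.comp_injective (i := fun n : ℕ => (n : ℤ) + 1) fun a b h => by simpa using h
  have h2 : Summable fun n : ℕ => f (-((n : ℤ) + 1)) :=
    hsum.comp_injective (i := fun n : ℕ => -((n : ℤ) + 1)) fun a b h => by simpa using h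
  -- Pairing `k` with `-k` turns the sum over `ℤ` into the cotangent expansion.
  have htot : ∑' k, f k = ((π : ℂ) * Complex.cot (π * z)).im := by
    rw [tsum_of_add_one_of_neg_add_one h1 h2, sub_eq_iff_eq_add.1 hcot, Complex.add_im, him,
      add_right_comm, ← h1.tsum_add h2]
    congr 1
    · refine tsum_congr fun n => ?_
      simp only [hf, Complex.add_im]
      push_cast
      rw [add_comm, ← sub_eq_add_neg]
    · simp [hf]
  rw [pi_mul_cot_pi_q_exp, tsum_geometric_of_norm_lt_one
    (UpperHalfPlane.norm_exp_two_pi_I_lt_one z)] at htot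
  have hn : ‖Complex.exp (2 * π * Complex.I * z)‖ = (exp (2 * π * s))⁻¹ := norm_nome μ s
  set q := Complex.exp (2 * π * Complex.I * z)
  have hre : ((1 - q)⁻¹).re ≤ (1 - (exp (2 * π * s))⁻¹)⁻¹ := by
    refine (Complex.re_le_norm _).trans ?_
    rw [norm_inv]
    have : 1 - (exp (2 * π * s))⁻¹ ≤ ‖1 - q‖ := by
      simpa [hn] using norm_sub_norm_le 1 q
    exact inv_anti₀ (by simpa using inv_lt_one_of_one_lt₀ hE) this
  have him2 : ((π : ℂ) * Complex.I - 2 * π * Complex.I * (1 - q)⁻¹).im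
      = π - 2 * π * ((1 - q)⁻¹).re := by
    simp [-Complex.inv_re, -Complex.inv_im]
  rw [him2, tsum_congr hfk, tsum_mul_left] at htot
  have hE' : (1 - (exp (2 * π * s))⁻¹)⁻¹ = 1 + 1 / (exp (2 * π * s) - 1) := by
    have : exp (2 * π * s) - 1 ≠ 0 := by linarith
    field_simp
    ring
  rw [hE'] at hre
  have h3 := mul_le_mul_of_nonneg_left hre (by positivity : 0 ≤ 2 * π)
  rw [div_mul_eq_mul_div, le_div_iff₀ hs]
  have : π * (1 + 2 / (exp (2 * π * s) - 1)) = 2 * π * (1 + 1 / (exp (2 * π * s) - 1)) - π := by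
    ring
  linarith

/-- The right-hand side is the value of the sum for `μ` an integer; its leading factor is
`∫ (x² + s²)⁻² dx = π / (2 s³)`. -/
lemma cauchySqSum_le (μ s : ℝ) (hs : 0 < s) :
    ∑' k : ℤ, ((((k : ℝ) - μ) ^ 2 + s ^ 2) ^ 2)⁻¹ ≤
      π / (2 * s ^ 3) * (1 + 2 / (exp (2 * π * s) - 1) +
        4 * π * s * exp (2 * π * s) / (exp (2 * π * s) - 1) ^ 2) := by
  set z : UpperHalfPlane := ⟨⟨-μ, s⟩, hs⟩ with hz
  have hzim : (z : ℂ).im = s := rfl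
  have hzre : (z : ℂ).re = -μ := rfl
  have hE : 1 < exp (2 * π * s) := Real.one_lt_exp_iff.2 (by positivity)
  have hS1 := cauchySum_summable μ s 1 le_rfl
  simp only [pow_one] at hS1
  have hS2 := cauchySum_summable μ s 2 (by norm_num)
  have hlip := EisensteinSeries.qExpansion_identity le_rfl z
  simp only [pow_one] at hlip
  rw [tsum_coe_mul_geometric_of_norm_lt_one (UpperHalfPlane.norm_exp_two_pi_I_lt_one z)] at hlip
  have hn : ‖Complex.exp (2 * π * Complex.I * z)‖ = (exp (2 * π * s))⁻¹ := norm_nome μ s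
  set q := Complex.exp (2 * π * Complex.I * z)
  have hsq : Summable fun k : ℤ => 1 / ((z : ℂ) + k) ^ (1 + 1) := by
    refine (EisensteinSeries.linear_right_summable (z : ℂ) 1 (k := 2) le_rfl).congr fun k => ?_
    norm_num
  have hre := Complex.re_tsum hsq
  have hterm : ∀ k : ℤ, (1 / ((z : ℂ) + k) ^ (1 + 1)).re =
      (((k : ℝ) - μ) ^ 2 + s ^ 2)⁻¹ - 2 * s ^ 2 * ((((k : ℝ) - μ) ^ 2 + s ^ 2) ^ 2)⁻¹ := by
    intro k
    have hpos : 0 < ((k : ℝ) - μ) ^ 2 + s ^ 2 := by positivity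
    have hns : Complex.normSq ((z : ℂ) + k) = ((k : ℝ) - μ) ^ 2 + s ^ 2 := by
      simp only [Complex.normSq_apply, Complex.add_re, Complex.add_im,
        hzim, hzre, Complex.intCast_re, Complex.intCast_im]
      ring
    rw [one_div, Complex.inv_re, map_pow, hns]
    simp only [pow_succ, pow_zero, one_mul, Complex.mul_re, Complex.add_re, Complex.add_im,
        hzim, hzre, Complex.intCast_re, Complex.intCast_im]
    simp only [← pow_two]
    field_simp
    ring
  rw [tsum_congr hterm, hS1.tsum_sub (hS2.mul_left _), tsum_mul_left, hlip] at hre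
  have hlow : -(4 * π ^ 2 * (exp (2 * π * s) / (exp (2 * π * s) - 1) ^ 2)) ≤
      ((-2 * π * Complex.I) ^ (1 + 1) / ((Nat.factorial 1 : ℕ) : ℂ) * (q / (1 - q) ^ 2)).re := by
    refine neg_le.1 ((neg_le_abs _).trans ((Complex.abs_re_le_norm _).trans ?_))
    have hnorm : ‖(-2 * π * Complex.I) ^ (1 + 1) / ((Nat.factorial 1 : ℕ) : ℂ) *
        (q / (1 - q) ^ 2)‖ = 4 * π ^ 2 * ((exp (2 * π * s))⁻¹ / ‖1 - q‖ ^ 2) := by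
      simp [hn, abs_of_pos Real.pi_pos]
      left; ring
    rw [hnorm]
    have h1 : 1 - (exp (2 * π * s))⁻¹ ≤ ‖1 - q‖ := by
      simpa [hn] using norm_sub_norm_le 1 q
    have h2 : 0 < 1 - (exp (2 * π * s))⁻¹ := by simpa using inv_lt_one_of_one_lt₀ hE
    have h3 : exp (2 * π * s) / (exp (2 * π * s) - 1) ^ 2
        = (exp (2 * π * s))⁻¹ / (1 - (exp (2 * π * s))⁻¹) ^ 2 := by
      have : exp (2 * π * s) - 1 ≠ 0 := by linarith
      field_simp
    rw [h3]
    gcongr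
  have hA := cauchySum_le μ s hs
  have key : 2 * s ^ 2 * ∑' k : ℤ, ((((k : ℝ) - μ) ^ 2 + s ^ 2) ^ 2)⁻¹ ≤
      π / s * (1 + 2 / (exp (2 * π * s) - 1)) +
        4 * π ^ 2 * (exp (2 * π * s) / (exp (2 * π * s) - 1) ^ 2) := by linarith
  rw [mul_comm, ← le_div_iff₀ (by positivity)] at key
  refine key.trans (le_of_eq ?_)
  have : exp (2 * π * s) - 1 ≠ 0 := by linarith
  field_simp

/-- Hölder's inequality with conjugate exponents `1 / α` and `1 / (1 - α)`, in logarithmic form: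
a weighted first moment of `p` bounds its Rényi entropy of order `α = m / (m + 1)`. -/
lemma renyi_le (p w : ℤ → ℝ) (m : ℕ) (hm : 1 ≤ m) (α : ℝ) (hα : α = m / (m + 1))
    (hp0 : ∀ k, 0 ≤ p k) (hw : ∀ k, 0 < w k)
    (hpw : Summable fun k => w k * p k) (hwm : Summable fun k => (w k ^ m)⁻¹)
    (hpa : Summable fun k => p k ^ α) (hpos : ∃ k, 0 < p k) :
    1 / (1 - α) * log (∑' k, p k ^ α) ≤
      log ((∑' k, w k * p k) ^ m * ∑' k, (w k ^ m)⁻¹) := by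
  have hm0 : (0 : ℝ) < m := by exact_mod_cast hm
  have hα0 : 0 < α := by rw [hα]; positivity
  have h1α : 1 - α = 1 / (m + 1) := by rw [hα]; field_simp; ring
  have hα1 : 0 < 1 - α := by rw [h1α]; positivity
  have hconj : (1 / α).HolderConjugate (1 / (1 - α)) := by
    rw [Real.holderConjugate_iff]
    refine ⟨(one_lt_div hα0).2 (by linarith), by simp⟩
  have hf : ∀ k, ((w k * p k) ^ α) ^ (1 / α) = w k * p k := fun k => by
    rw [← Real.rpow_mul (mul_nonneg (hw k).le (hp0 k)), mul_one_div_cancel hα0.ne', Real.rpow_one]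
  have hg : ∀ k, ((w k) ^ (-α)) ^ (1 / (1 - α)) = (w k ^ m)⁻¹ := fun k => by
    rw [← Real.rpow_mul (hw k).le, ← Real.rpow_natCast, ← Real.rpow_neg (hw k).le]
    congr 1
    rw [h1α, hα]; field_simp
  have hfg : ∀ k, (w k * p k) ^ α * (w k) ^ (-α) = p k ^ α := fun k => by
    rw [Real.mul_rpow (hw k).le (hp0 k), mul_right_comm, ← Real.rpow_add (hw k)]
    simp
  have hH := Real.inner_le_Lp_mul_Lq_tsum_of_nonneg hconj
    (f := fun k => (w k * p k) ^ α) (g := fun k => (w k) ^ (-α))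
    (fun k => Real.rpow_nonneg (mul_nonneg (hw k).le (hp0 k)) _)
    (fun k => Real.rpow_nonneg (hw k).le _)
    (by simpa only [hf] using hpw) (by simpa only [hg] using hwm)
  simp only [hf, hg, hfg, one_div_one_div] at hH
  obtain ⟨k₀, hk₀⟩ := hpos
  have hL : 0 < ∑' k, p k ^ α :=
    hpa.tsum_pos (fun k => Real.rpow_nonneg (hp0 k) _) k₀ (Real.rpow_pos_of_pos hk₀ _)
  have hA : 0 < ∑' k, w k * p k :=
    hpw.tsum_pos (fun k => mul_nonneg (hw k).le (hp0 k)) k₀ (mul_pos (hw k₀) hk₀)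
  have hB : 0 < ∑' k, (w k ^ m)⁻¹ :=
    hwm.tsum_pos (fun k => (inv_pos.2 (pow_pos (hw k) m)).le) 0 (inv_pos.2 (pow_pos (hw 0) m))
  have hlog := Real.log_le_log hL hH
  rw [Real.log_mul (by positivity) (by positivity), Real.log_rpow hA, Real.log_rpow hB] at hlog
  rw [Real.log_mul (by positivity) (by positivity), Real.log_pow, one_div_mul_eq_div,
    div_le_iff₀ hα1]
  refine hlog.trans (le_of_eq ?_)
  rw [h1α, hα]
  field_simp

/-- At `t = u` this follows from `u ≤ exp u - 1`; the right-hand side is decreasing in `t`. -/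
lemma correction_le (t u : ℝ) (ht : 0 < t) (htu : t ≤ u) :
    2 / (exp u - 1) + 2 * u * exp u / (exp u - 1) ^ 2 ≤ (4 + 2 * t) / (exp t - 1) := by
  have hu : 0 < u := ht.trans_le htu
  have hEt : 0 < exp t - 1 := by linarith [Real.add_one_lt_exp ht.ne']
  have hEu : u ≤ exp u - 1 := by linarith [Real.add_one_le_exp u]
  have hEu0 : 0 < exp u - 1 := hu.trans_le hEu
  -- The chord slope `(exp x - 1) / x` of the convex function `exp` is increasing.
  have hconv : u * (exp t - 1) ≤ t * (exp u - 1) := by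
    have h := convexOn_exp.2 (Set.mem_univ u) (Set.mem_univ 0) (by positivity : 0 ≤ t / u)
      (sub_nonneg.2 ((div_le_one hu).2 htu)) (by ring)
    simp only [smul_eq_mul, mul_zero, add_zero, Real.exp_zero, mul_one] at h
    rw [div_mul_cancel₀ _ hu.ne'] at h
    have h2 := mul_le_mul_of_nonneg_left h hu.le
    have h3 : u * (t / u * exp u + (1 - t / u)) = t * exp u + (u - t) := by field_simp
    linarith
  calc 2 / (exp u - 1) + 2 * u * exp u / (exp u - 1) ^ 2
      ≤ (4 + 2 * u) / (exp u - 1) := by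
        rw [div_add_div _ _ hEu0.ne' (by positivity), div_le_div_iff₀ (by positivity) hEu0]
        have : 0 ≤ (exp u - 1) ^ 2 * (exp u - 1 - u) :=
          mul_nonneg (by positivity) (by linarith)
        nlinarith
    _ ≤ (4 + 2 * t) / (exp t - 1) := by
        rw [div_le_div_iff₀ hEu0 hEt]
        have : exp t ≤ exp u := Real.exp_le_exp.2 htu
        nlinarith

/-- Improved Massey-type inequalities for Rényi entropies of orders `1/2` and `2/3`:
if `X` is integer-valued with finite variance `σ² > 0` and finite Rényi entropies of
orders `1/2` and `2/3`, then `H_{1/2}(X) < ln(2πσ) + 2/(e^{2πσ} - 1)` and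
`H_{2/3}(X) < ln(8πσ/(3√3)) + 4(1 + πσ)/(e^{2πσ} - 1)`, where `σ = √σ²`. -/
theorem improved_massey_renyi_half_twothirds
    (p : ℤ → ℝ) (hp0 : ∀ k, 0 ≤ p k) (hp1 : ∑' k, p k = 1)
    (μ : ℝ) (hμ : μ = ∑' k : ℤ, (k : ℝ) * p k)
    (hμs : Summable (fun k : ℤ => (k : ℝ) * p k))
    (σ2 : ℝ) (hσ2 : σ2 = ∑' k : ℤ, ((k : ℝ) - μ) ^ 2 * p k)
    (hσ2s : Summable (fun k : ℤ => ((k : ℝ) - μ) ^ 2 * p k)) (hσ2pos : 0 < σ2)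
    (hhalf : Summable (fun k : ℤ => p k ^ ((1 : ℝ) / 2)))
    (htwothirds : Summable (fun k : ℤ => p k ^ ((2 : ℝ) / 3))) :
    (1 / (1 - (1 : ℝ) / 2)) * Real.log (∑' k : ℤ, p k ^ ((1 : ℝ) / 2)) <
      Real.log (2 * π * Real.sqrt σ2) + 2 / (Real.exp (2 * π * Real.sqrt σ2) - 1) ∧
    (1 / (1 - (2 : ℝ) / 3)) * Real.log (∑' k : ℤ, p k ^ ((2 : ℝ) / 3)) <
      Real.log (8 * π * Real.sqrt σ2 / (3 * Real.sqrt 3))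
        + 4 * (1 + π * Real.sqrt σ2) / (Real.exp (2 * π * Real.sqrt σ2) - 1) := by
  have hps : Summable p := by
    by_contra h
    rw [tsum_eq_zero_of_not_summable h] at hp1
    exact zero_ne_one hp1
  have hpos : ∃ k, 0 < p k := by
    by_contra! h
    have : p = 0 := funext fun k => le_antisymm (h k) (hp0 k)
    simp [this] at hp1
  obtain ⟨σ, hσ, rfl⟩ : ∃ σ : ℝ, 0 < σ ∧ σ2 = σ ^ 2 :=
    ⟨√σ2, Real.sqrt_pos.2 hσ2pos, (Real.sq_sqrt hσ2pos.le).symm⟩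
  rw [Real.sqrt_sq hσ.le]
  have hE : 0 < exp (2 * π * σ) - 1 :=
    sub_pos.2 (Real.one_lt_exp_iff.2 (by positivity))
  have hw : ∀ s : ℝ, 0 < s → ∀ k : ℤ, 0 < ((k : ℝ) - μ) ^ 2 + s ^ 2 := fun s hs k => by positivity
  have hpw : ∀ s : ℝ, HasSum (fun k : ℤ => (((k : ℝ) - μ) ^ 2 + s ^ 2) * p k)
      (σ ^ 2 + s ^ 2) := fun s => by
    have h1 := hσ2s.hasSum
    rw [← hσ2] at h1
    have h2 := hps.hasSum.mul_left (s ^ 2)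
    rw [hp1, mul_one] at h2
    simpa only [add_mul] using h1.add h2
  -- This step, by `log (1 + x) < x`, is where strictness enters.
  have hbound : ∀ c x L : ℝ, 0 < c → 0 < x → L ≤ log (c * (1 + x)) → L < log c + x :=
    fun c x L hc hx hL => by
      rw [Real.log_mul hc.ne' (by positivity)] at hL
      have := Real.log_lt_sub_one_of_pos (by positivity : 0 < 1 + x) (by linarith)
      linarith
  constructor
  · refine hbound _ _ _ (by positivity) (by positivity) ?_
    have hS := cauchySum_summable μ σ 1 le_rfl
    refine (renyi_le p _ 1 le_rfl _ (by norm_num) hp0 (hw σ hσ) (hpw σ).summable hS hhalf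
      hpos).trans ?_
    have hS0 : 0 < ∑' k : ℤ, ((((k : ℝ) - μ) ^ 2 + σ ^ 2) ^ 1)⁻¹ :=
      hS.tsum_pos (fun k => (inv_pos.2 (pow_pos (hw σ hσ k) 1)).le) 0
        (inv_pos.2 (pow_pos (hw σ hσ 0) 1))
    rw [(hpw σ).tsum_eq]
    refine Real.log_le_log (by positivity) ?_
    simp only [pow_one]
    calc _ ≤ (σ ^ 2 + σ ^ 2) * (π / σ * (1 + 2 / (exp (2 * π * σ) - 1))) := by
          gcongr
          exact cauchySum_le μ σ hσ
      _ = _ := by field_simp; ring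
  · refine hbound _ _ _ (by positivity) (by positivity) ?_
    have h3 : √3 ^ 2 = (3 : ℝ) := Real.sq_sqrt (by norm_num)
    have h3' : 1 ≤ √(3 : ℝ) := Real.one_le_sqrt.2 (by norm_num)
    -- `s = √3 σ` minimises `(σ² + s²)² / s³`.
    set s := √3 * σ with hsdef
    have hs : 0 < s := by positivity
    have hS := cauchySum_summable μ s 2 (by norm_num)
    refine (renyi_le p _ 2 (by norm_num) _ (by norm_num) hp0 (hw s hs) (hpw s).summable hS
      htwothirds hpos).trans ?_
    have hS0 : 0 < ∑' k : ℤ, ((((k : ℝ) - μ) ^ 2 + s ^ 2) ^ 2)⁻¹ :=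
      hS.tsum_pos (fun k => (inv_pos.2 (pow_pos (hw s hs k) 2)).le) 0
        (inv_pos.2 (pow_pos (hw s hs 0) 2))
    rw [(hpw s).tsum_eq]
    refine Real.log_le_log (by positivity) ?_
    have hcorr := correction_le (2 * π * σ) (2 * π * s) (by positivity)
      (by rw [hsdef]; gcongr; nlinarith)
    have hcoef : (σ ^ 2 + s ^ 2) ^ 2 * (π / (2 * s ^ 3)) = 8 * π * σ / (3 * √3) := by
      have h33 : √3 ^ 3 = 3 * √(3 : ℝ) := by rw [pow_succ, h3]
      rw [hsdef, mul_pow, mul_pow, h3, h33]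
      field_simp
      ring
    rw [← hcoef, mul_assoc]
    gcongr
    refine (cauchySqSum_le μ s hs).trans (mul_le_mul_of_nonneg_left ?_ (by positivity))
    have e1 : 4 * π * s * exp (2 * π * s) = 2 * (2 * π * s) * exp (2 * π * s) := by ring
    have e2 : 4 * (1 + π * σ) = 4 + 2 * (2 * π * σ) := by ring
    rw [e1, e2, add_assoc]
    linarith
end

section
/- Improved Massey inequality for guessing: let X be a discrete random variable taking countably many values with finite guessing entropy G(X). Then G(X) > e^{H(X)}/e + 1/2 = e^{H(X)−1} + 1/2. -/
/-!
Put `m = G - 1/2`. Gibbs' inequality against the geometric law `q n = (1 - r) r ^ n` with ratio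
`r = exp (-1/m)` gives `H ≤ (G - 1) / m - log (1 - r) = 1 - 1/(2m) - log (1 - exp (-1/m))`
(`entropy_le_geometric`). Hence `exp (H - 1) ≤ 1 / (2 sinh (1/(2m)))`, which is strictly smaller
than `m` because `x < sinh x` for `x > 0`. Gibbs' inequality holds for every ratio in `(0, 1)`, so
the entropy-maximising ratio `(G - 1)/G`, which degenerates at `G = 1`, is not needed.
-/

open MeasureTheory Real

/-- The pointwise form of Gibbs' inequality; it remains true at `a = 0`, where the left-hand side
is `0`. -/
lemma mul_log_one_div_le {a q : ℝ} (ha : 0 ≤ a) (hq : 0 < q) :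
    a * Real.log (1 / a) ≤ a * (-Real.log q) + (q - a) := by
  rcases ha.eq_or_lt with rfl | ha
  · simp [hq.le]
  · have h := Real.log_le_sub_one_of_pos (div_pos hq ha)
    rw [Real.log_div hq.ne' ha.ne'] at h
    have h2 := mul_le_mul_of_nonneg_left h ha.le
    have h3 : a * (q / a - 1) = q - a := by field_simp
    rw [one_div, Real.log_inv]
    linarith

/-- Gibbs' inequality against the geometric law of ratio `exp (-t)`. -/
lemma entropy_le_geometric (p : ℕ → ℝ) (hp0 : ∀ n, 0 ≤ p n) (hp : HasSum p 1) (G : ℝ)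
    (hG : HasSum (fun n : ℕ => ((n : ℝ) + 1) * p n) G) {t : ℝ} (ht : 0 < t) :
    ∑' n, p n * Real.log (1 / p n) ≤ (G - 1) * t - Real.log (1 - Real.exp (-t)) := by
  have hr : Real.exp (-t) < 1 := by
    rw [Real.exp_lt_one_iff]
    linarith
  have hr1 : 0 < 1 - Real.exp (-t) := by linarith
  have hq : HasSum (fun n : ℕ => (1 - Real.exp (-t)) * Real.exp (-t) ^ n) 1 := by
    have h := (hasSum_geometric_of_lt_one (Real.exp_pos (-t)).le hr).mul_left
      (1 - Real.exp (-t))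
    rwa [mul_inv_cancel₀ hr1.ne'] at h
  have hbound : HasSum (fun n : ℕ => p n * (-Real.log ((1 - Real.exp (-t)) * Real.exp (-t) ^ n))
      + ((1 - Real.exp (-t)) * Real.exp (-t) ^ n - p n))
      ((G - 1) * t - Real.log (1 - Real.exp (-t))) := by
    have h := (((hG.sub hp).mul_right t).sub
      (hp.mul_right (Real.log (1 - Real.exp (-t))))).add (hq.sub hp)
    convert h using 1
    · rfl
    · funext n
      rw [Real.log_mul hr1.ne' (pow_pos (Real.exp_pos _) n).ne', Real.log_pow, Real.log_exp]
      ring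
    · ring
  have hle : ∀ n, p n * Real.log (1 / p n) ≤
      p n * (-Real.log ((1 - Real.exp (-t)) * Real.exp (-t) ^ n))
      + ((1 - Real.exp (-t)) * Real.exp (-t) ^ n - p n) := fun n =>
    mul_log_one_div_le (hp0 n) (mul_pos hr1 (pow_pos (Real.exp_pos _) n))
  have hnn : ∀ n, 0 ≤ p n * Real.log (1 / p n) := fun n => by
    have h1 : p n ≤ 1 := le_hasSum hp n fun j _ => hp0 j
    rw [one_div, Real.log_inv]
    exact mul_nonneg (hp0 n) (neg_nonneg.2 (Real.log_nonpos (hp0 n) h1))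
  have hs := Summable.of_nonneg_of_le hnn hle hbound.summable
  exact hasSum_le hle hs.hasSum hbound

/-- Improved Massey inequality for guessing: if `X` is a discrete random variable whose
probabilities arranged in nonincreasing order are `p 0 ≥ p 1 ≥ ⋯`, with finite guessing
entropy `G(X) = Σ_{k≥1} k·p_(k)`, then `G(X) > e^{H(X)}/e + 1/2 = e^{H(X)-1} + 1/2`. -/
theorem improved_massey_guessing
    (p : ℕ → ℝ) (hp0 : ∀ n, 0 ≤ p n) (hmono : Antitone p) (hp1 : ∑' n, p n = 1)
    (G : ℝ) (hG : G = ∑' n : ℕ, ((n : ℝ) + 1) * p n)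
    (hGs : Summable (fun n : ℕ => ((n : ℝ) + 1) * p n)) :
    G > Real.exp ((∑' n, p n * Real.log (1 / p n)) - 1) + 1 / 2 := by
  have hGsum : HasSum (fun n : ℕ => ((n : ℝ) + 1) * p n) G := hG ▸ hGs.hasSum
  have hple : ∀ n : ℕ, p n ≤ ((n : ℝ) + 1) * p n := fun n => by
    nlinarith [mul_nonneg (Nat.cast_nonneg (α := ℝ) n) (hp0 n)]
  have hp : HasSum p 1 := hp1 ▸ (Summable.of_nonneg_of_le hp0 hple hGs).hasSum
  have hG1 : 1 ≤ G := hasSum_le hple hp hGsum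
  obtain ⟨x, hx⟩ : ∃ x, x = (2 * (G - 1 / 2))⁻¹ := ⟨_, rfl⟩
  have hm : 0 < G - 1 / 2 := by linarith
  have hx0 : 0 < x := hx ▸ by positivity
  have hGx : (G - 1 / 2) * (2 * x) = 1 := by
    rw [hx, mul_inv, mul_inv_cancel_left₀ two_ne_zero, mul_inv_cancel₀ hm.ne']
  have hH := entropy_le_geometric p hp0 hp G hGsum (t := 2 * x) (by linarith)
  have hr1 : 0 < 1 - Real.exp (-(2 * x)) := by
    have : Real.exp (-(2 * x)) < 1 := by
      rw [Real.exp_lt_one_iff]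
      linarith
    linarith
  have hle : Real.exp ((∑' n, p n * Real.log (1 / p n)) - 1) ≤
      Real.exp (-x) / (1 - Real.exp (-(2 * x))) := by
    calc _ ≤ Real.exp (-x - Real.log (1 - Real.exp (-(2 * x)))) :=
          Real.exp_le_exp.2 (by linarith)
      _ = _ := by rw [Real.exp_sub, Real.exp_log hr1]
  -- `1 - exp (-2x) = 2 exp (-x) sinh x`
  have hsinh : 1 - Real.exp (-(2 * x)) = 2 * Real.exp (-x) * Real.sinh x := by
    have h1 : Real.exp (-x) * Real.exp x = 1 := by rw [← Real.exp_add]; simp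
    have h2 : Real.exp (-(2 * x)) = Real.exp (-x) * Real.exp (-x) := by
      rw [← Real.exp_add]
      ring_nf
    rw [Real.sinh_eq, h2]
    linear_combination -h1
  have hlt : Real.exp (-x) / (1 - Real.exp (-(2 * x))) < G - 1 / 2 := by
    rw [div_lt_iff₀ hr1, hsinh]
    have h := mul_lt_mul_of_pos_left (Real.self_lt_sinh_iff.2 hx0)
      (mul_pos (mul_pos hm two_pos) (Real.exp_pos (-x)))
    have h2 : (G - 1 / 2) * 2 * Real.exp (-x) * x = Real.exp (-x) := by
      linear_combination Real.exp (-x) * hGx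
    linarith
  linarith
end

section
/- Let α > 1/2, α ≠ 1, and let X be a discrete random variable taking countably many values with finite guessing entropy G(X). Then G(X) > ((2α−1)/α)^{α/(1−α)} · e^{H_α(X)} + 1/2; equivalently, G(X) > e^{H_α(X)} / (1 + (α−1)/α)^{α/(α−1)} + 1/2. -/
open MeasureTheory Real

/-!
Spread each mass `p n` uniformly over `[n, n + 1)`. The resulting density on `[0, ∞)` has mean
`m = G - 1 / 2` and the same integral of its `α`-th power as the sum `S = ∑ p n ^ α`, so the claim is
the maximum-Rényi-entropy inequality for densities on `[0, ∞)` of prescribed mean, which is strict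
because a step function is never the maximizer.

It is proved on sums, by Hölder's inequality with a weight read off the maximizer at the midpoints
`n + 1 / 2`. For `α < 1`, put `w n = 1 + (n + 1 / 2) / b` and `k = α / (1 - α)`; then
`S ≤ (∑ p n * w n) ^ α * (∑ w n ^ (-k)) ^ (1 - α)`, where `∑ p n * w n = 1 + m / b`.
For `1 < α`, put `w n = 1 - (n + 1 / 2) / b` and `k = α / (α - 1)`; then
`1 - m / b ≤ ∑ p n * max (w n) 0 ≤ S ^ (1 / α) * (∑ (max (w n) 0) ^ k) ^ (1 / k)`.
In both cases the last sum is a midpoint sum of a convex function, hence strictly less than the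
integral (`tsum_midpoint_neg_lt`, `tsum_midpoint_pos_lt`); the integrals are explicit, so this is a
telescoping argument resting on `neg_power_gap` and `pos_power_gap`. The optimal `b` is
`m * (k - 1)`, respectively `m * (k + 1)`, and makes the integral equal to `m`.
-/

/-- Comparison with a telescoping series; strictness in the zeroth term suffices. -/
lemma tsum_lt_of_telescope {a T : ℕ → ℝ} (ha : ∀ n, 0 ≤ a n) (hT : ∀ n, 0 ≤ T n)
    (h : ∀ n, a n ≤ T n - T (n + 1)) (h0 : a 0 < T 0 - T 1) :
    Summable a ∧ ∑' n, a n < T 0 := by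
  have key : ∀ N, ∑ i ∈ Finset.range N, a i ≤ a 0 + T 1 := by
    intro N
    rcases N with _ | N
    · simpa using add_nonneg (ha 0) (hT 1)
    · have : ∑ i ∈ Finset.range (N + 1), a i ≤ a 0 + T 1 - T (N + 1) := by
        induction N with
        | zero => simp
        | succ k ih => rw [Finset.sum_range_succ]; linarith [h (k + 1)]
      linarith [hT (N + 1)]
  exact ⟨summable_of_sum_range_le ha key,
    (Real.tsum_le_of_sum_range_le ha key).trans_lt (by linarith)⟩

/-- The odd function `t ↦ σ ((1 + t) ^ e - (1 - t) ^ e - 2 e t)` vanishes at `0`, so it is positive on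
`(0, 1)` once its derivative is. The sign `σ` lets one lemma serve both signs of `e`. -/
lemma power_gap_of_deriv_pos (e : ℝ) (σ : ℝ)
    (hσ : ∀ t ∈ Set.Ioo (0 : ℝ) 1, 0 < σ * e * ((1 + t) ^ (e - 1) + (1 - t) ^ (e - 1) - 2))
    {t : ℝ} (ht0 : 0 < t) (ht1 : t < 1) :
    0 < σ * ((1 + t) ^ e - (1 - t) ^ e - 2 * e * t) := by
  have hd : ∀ x ∈ Set.Ico (0 : ℝ) 1,
      HasDerivAt (fun x : ℝ => σ * ((1 + x) ^ e - (1 - x) ^ e - 2 * e * x))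
        (σ * e * ((1 + x) ^ (e - 1) + (1 - x) ^ (e - 1) - 2)) x := by
    intro x hx
    have h1 : HasDerivAt (fun x : ℝ => (1 + x) ^ e) (1 * e * (1 + x) ^ (e - 1)) x :=
      ((hasDerivAt_id x).const_add 1).rpow_const (Or.inl (by simp; linarith [hx.1]))
    have h2 : HasDerivAt (fun x : ℝ => (1 - x) ^ e) (-1 * e * (1 - x) ^ (e - 1)) x :=
      ((hasDerivAt_id x).const_sub 1).rpow_const (Or.inl (by simp; linarith [hx.2]))
    have h3 : HasDerivAt (fun x : ℝ => 2 * e * x) (2 * e * 1) x :=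
      (hasDerivAt_id x).const_mul _
    exact (((h1.sub h2).sub h3).const_mul σ).congr_deriv (by ring)
  have hm : StrictMonoOn (fun x : ℝ => σ * ((1 + x) ^ e - (1 - x) ^ e - 2 * e * x))
      (Set.Ico (0 : ℝ) 1) := by
    apply strictMonoOn_of_deriv_pos (convex_Ico 0 1)
    · intro x hx
      exact (hd x hx).continuousAt.continuousWithinAt
    · intro x hx
      rw [interior_Ico] at hx
      rw [(hd x ⟨hx.1.le, hx.2⟩).deriv]
      exact hσ x hx
  have := hm (⟨le_rfl, one_pos⟩ : (0 : ℝ) ∈ Set.Ico (0 : ℝ) 1) ⟨ht0.le, ht1⟩ ht0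
  simpa using this

/-- Strict midpoint (Hermite–Hadamard) inequality for the convex function `x ↦ x ^ (-c - 1)` on
`[1 - t, 1 + t]`, with the integral evaluated. -/
lemma neg_power_gap {c t : ℝ} (hc : 0 < c) (ht0 : 0 < t) (ht1 : t < 1) :
    2 * c * t < (1 - t) ^ (-c) - (1 + t) ^ (-c) := by
  have := power_gap_of_deriv_pos (-c) (-1) (fun t ht => ?_) ht0 ht1
  · linarith
  have ha : 0 < (1 + t) ^ (-c - 1) := rpow_pos_of_pos (by linarith [ht.1]) _
  have hb : 0 < (1 - t) ^ (-c - 1) := rpow_pos_of_pos (by linarith [ht.2]) _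
  have hab : 1 < (1 + t) ^ (-c - 1) * (1 - t) ^ (-c - 1) := by
    rw [← mul_rpow (by linarith [ht.1]) (by linarith [ht.2])]
    exact one_lt_rpow_of_pos_of_lt_one_of_neg (by nlinarith [ht.1, ht.2])
      (by nlinarith [ht.1]) (by linarith)
  have : 2 < (1 + t) ^ (-c - 1) + (1 - t) ^ (-c - 1) := by
    nlinarith [sq_nonneg ((1 + t) ^ (-c - 1) - (1 - t) ^ (-c - 1))]
  have := mul_pos hc (sub_pos.2 this)
  linarith

/-- Strict midpoint (Hermite–Hadamard) inequality for the convex function `x ↦ (max x 0) ^ (e - 1)`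
on `[1 - t, 1 + t]`, with the integral evaluated; the interval may reach below `0`. -/
lemma pos_power_gap {e t : ℝ} (he : 2 < e) (ht0 : 0 < t) :
    2 * e * t < (1 + t) ^ e - (max (1 - t) 0) ^ e := by
  rcases lt_or_ge t 1 with ht1 | ht1
  · rw [max_eq_left (by linarith)]
    have := power_gap_of_deriv_pos e 1 (fun t ht => ?_) ht0 ht1
    · linarith
    have ha := one_add_mul_self_lt_rpow_one_add (s := t) (p := e - 1) (by linarith [ht.1])
      ht.1.ne' (by linarith)
    have hb := one_add_mul_self_lt_rpow_one_add (s := -t) (p := e - 1) (by linarith [ht.2])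
      (neg_ne_zero.2 ht.1.ne') (by linarith)
    rw [← sub_eq_add_neg] at hb
    have := mul_pos (by linarith : 0 < e) (by linarith :
      0 < (1 + t) ^ (e - 1) + (1 - t) ^ (e - 1) - 2)
    linarith
  · rw [max_eq_right (by linarith), zero_rpow (by linarith), sub_zero]
    have ha := one_add_mul_self_lt_rpow_one_add (s := t) (p := e / 2) (by linarith)
      ht0.ne' (by linarith)
    -- Bernoulli with exponent `e / 2`, then `(1 + y) ^ 2 ≥ 4 y` for `y = e t / 2`.
    have hs : (1 + t) ^ e = ((1 + t) ^ (e / 2)) ^ 2 := by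
      rw [← rpow_natCast, ← rpow_mul (by linarith)]; norm_num
    rw [hs]
    have hp : 0 < e / 2 * t := by positivity
    nlinarith [sq_nonneg (e / 2 * t - 1)]

/-- The midpoint sum of `x ↦ (1 + x / b) ^ (-k)` is smaller than its integral over `[0, ∞)`. -/
lemma tsum_midpoint_neg_lt {k b : ℝ} (hk : 1 < k) (hb : 0 < b) :
    Summable (fun n : ℕ => (1 + ((n : ℝ) + 1 / 2) / b) ^ (-k)) ∧
      ∑' n : ℕ, (1 + ((n : ℝ) + 1 / 2) / b) ^ (-k) < b / (k - 1) := by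
  have hk' : 0 < k - 1 := by linarith
  have key : ∀ n : ℕ, (1 + ((n : ℝ) + 1 / 2) / b) ^ (-k) <
      b / (k - 1) * (1 + (n : ℝ) / b) ^ (-(k - 1)) -
      b / (k - 1) * (1 + ((n + 1 : ℕ) : ℝ) / b) ^ (-(k - 1)) := by
    intro n
    set w := 1 + ((n : ℝ) + 1 / 2) / b with hw
    have hn : (0 : ℝ) ≤ n := n.cast_nonneg
    have hw0 : 0 < w := by positivity
    have hwb : w * b = b + n + 1 / 2 := by rw [hw]; field_simp; ring
    -- In units of the midpoint value `w`, the interval endpoints are `1 ± t`.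
    set t := 1 / (2 * b * w) with ht
    have ht0 : 0 < t := by positivity
    have ht1 : t < 1 := by
      rw [ht, div_lt_one (by positivity)]; nlinarith
    have e1 : 1 + (n : ℝ) / b = w * (1 - t) := by
      rw [mul_sub, ht]; field_simp; linarith
    have e2 : 1 + ((n + 1 : ℕ) : ℝ) / b = w * (1 + t) := by
      push_cast
      rw [mul_add, ht]; field_simp; linarith
    rw [e1, e2, mul_rpow hw0.le (by linarith), mul_rpow hw0.le (by linarith)]
    have hg := neg_power_gap hk' ht0 ht1
    have hwk : w ^ (-k) = w ^ (-(k - 1)) / w := by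
      rw [← rpow_sub_one hw0.ne']; congr 1; ring
    have hpos : 0 < b / (k - 1) * w ^ (-(k - 1)) :=
      mul_pos (div_pos hb hk') (rpow_pos_of_pos hw0 _)
    have := mul_lt_mul_of_pos_left hg hpos
    have e3 : b / (k - 1) * w ^ (-(k - 1)) * (2 * (k - 1) * t) = w ^ (-k) := by
      rw [hwk, ht]; field_simp
    rw [e3] at this
    linarith
  have h := tsum_lt_of_telescope (a := fun n : ℕ => (1 + ((n : ℝ) + 1 / 2) / b) ^ (-k))
    (T := fun n : ℕ => b / (k - 1) * (1 + (n : ℝ) / b) ^ (-(k - 1)))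
    (fun n => by positivity) (fun n => by positivity) (fun n => (key n).le) (key 0)
  simpa using h

/-- The midpoint sum of `x ↦ (max (1 - x / b) 0) ^ k` is smaller than its integral over `[0, ∞)`.
The condition `1 / 2 < b` puts the first midpoint inside the support, where the comparison is
strict. -/
lemma tsum_midpoint_pos_lt {k b : ℝ} (hk : 1 < k) (hb : 1 / 2 < b) :
    Summable (fun n : ℕ => (max (1 - ((n : ℝ) + 1 / 2) / b) 0) ^ k) ∧
      ∑' n : ℕ, (max (1 - ((n : ℝ) + 1 / 2) / b) 0) ^ k < b / (k + 1) := by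
  have hb0 : 0 < b := by linarith
  have hpos : ∀ n : ℕ, 0 < 1 - ((n : ℝ) + 1 / 2) / b →
      (max (1 - ((n : ℝ) + 1 / 2) / b) 0) ^ k <
      b / (k + 1) * (max (1 - (n : ℝ) / b) 0) ^ (k + 1) -
      b / (k + 1) * (max (1 - ((n + 1 : ℕ) : ℝ) / b) 0) ^ (k + 1) := by
    intro n hw0
    rw [max_eq_left hw0.le]
    set w := 1 - ((n : ℝ) + 1 / 2) / b with hw
    have hwb : w * b = b - n - 1 / 2 := by rw [hw]; field_simp; ring
    -- In units of the midpoint value `w`, the interval endpoints are `1 ± t`.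
    set t := 1 / (2 * b * w) with ht
    have ht0 : 0 < t := by positivity
    have e1 : 1 - (n : ℝ) / b = w * (1 + t) := by
      rw [mul_add, ht]; field_simp; linarith
    have e2 : 1 - ((n + 1 : ℕ) : ℝ) / b = w * (1 - t) := by
      push_cast
      rw [mul_sub, ht]; field_simp; linarith
    have e4 : max (w * (1 - t)) 0 = w * max (1 - t) 0 := by
      rw [mul_max_of_nonneg _ _ hw0.le, mul_zero]
    rw [e1, e2, e4, max_eq_left (by positivity), mul_rpow hw0.le (by linarith),
      mul_rpow hw0.le (le_max_right _ _)]
    have hg := pos_power_gap (e := k + 1) (by linarith) ht0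
    have hwk : w ^ (k + 1) = w ^ k * w := rpow_add_one hw0.ne' k
    have hp : 0 < b / (k + 1) * w ^ (k + 1) :=
      mul_pos (by positivity) (rpow_pos_of_pos hw0 _)
    have := mul_lt_mul_of_pos_left hg hp
    have e3 : b / (k + 1) * w ^ (k + 1) * (2 * (k + 1) * t) = w ^ k := by
      rw [hwk, ht]; field_simp
    rw [e3] at this
    linarith
  have key : ∀ n : ℕ, (max (1 - ((n : ℝ) + 1 / 2) / b) 0) ^ k ≤
      b / (k + 1) * (max (1 - (n : ℝ) / b) 0) ^ (k + 1) -
      b / (k + 1) * (max (1 - ((n + 1 : ℕ) : ℝ) / b) 0) ^ (k + 1) := by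
    intro n
    rcases lt_or_ge 0 (1 - ((n : ℝ) + 1 / 2) / b) with h | h
    · exact (hpos n h).le
    · rw [max_eq_right h, zero_rpow (by linarith), ← mul_sub]
      refine mul_nonneg (by positivity) (sub_nonneg.2 ?_)
      refine rpow_le_rpow (le_max_right _ _) (max_le_max ?_ le_rfl) (by linarith)
      push_cast
      gcongr
      linarith
  have h := tsum_lt_of_telescope
    (a := fun n : ℕ => (max (1 - ((n : ℝ) + 1 / 2) / b) 0) ^ k)
    (T := fun n : ℕ => b / (k + 1) * (max (1 - (n : ℝ) / b) 0) ^ (k + 1))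
    (fun n => by positivity) (fun n => by positivity) key
    (hpos 0 (by
      rw [Nat.cast_zero, zero_add, sub_pos, div_lt_one hb0]; exact hb))
  simpa using h

lemma tsum_rpow_pos {α : ℝ} {p : ℕ → ℝ} (hp0 : ∀ n, 0 ≤ p n) (hp : HasSum p 1)
    (hS : Summable fun n => p n ^ α) : 0 < ∑' n, p n ^ α := by
  obtain ⟨n, hn⟩ : ∃ n, 0 < p n := by
    by_contra! h
    have : p = 0 := funext fun n => le_antisymm (h n) (hp0 n)
    rw [this] at hp
    exact zero_ne_one (hasSum_zero.unique hp)
  exact hS.tsum_pos (fun n => rpow_nonneg (hp0 n) _) n (rpow_pos_of_pos hn _)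

lemma bound_of_log_lt {α S m : ℝ} (hα : 1 / 2 < α) (hm : 0 < m)
    (h : α / (1 - α) * log ((2 * α - 1) / α) + 1 / (1 - α) * log S < log m) :
    ((2 * α - 1) / α) ^ (α / (1 - α)) * exp (1 / (1 - α) * log S) < m := by
  have hρ : 0 < (2 * α - 1) / α := div_pos (by linarith) (by linarith)
  rw [rpow_def_of_pos hρ, ← exp_add, ← lt_log_iff_exp_lt hm]
  linarith

/-- The bound for `α < 1`, in terms of `m = G - 1 / 2`. -/
lemma bound_of_lt_one {α : ℝ} (hα : 1 / 2 < α) (hα1 : α < 1) {p : ℕ → ℝ} (hp0 : ∀ n, 0 ≤ p n)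
    (hp : HasSum p 1) {m : ℝ} (hm : HasSum (fun n : ℕ => ((n : ℝ) + 1 / 2) * p n) m)
    (hm0 : 0 < m) :
    ((2 * α - 1) / α) ^ (α / (1 - α)) * exp (1 / (1 - α) * log (∑' n, p n ^ α)) < m := by
  have h1α : 0 < 1 - α := by linarith
  have hα0 : 0 < α := by linarith
  set k := α / (1 - α) with hk
  have hk1 : 1 < k := by rw [hk, one_lt_div h1α]; linarith
  have hkm : 0 < k - 1 := by linarith
  -- The scale `b` for which the density proportional to `(1 + x / b) ^ (-1 / (1 - α))` has mean `m`.
  set b := m * (k - 1) with hb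
  have hb0 : 0 < b := mul_pos hm0 hkm
  obtain ⟨hs, hlt⟩ := tsum_midpoint_neg_lt hk1 hb0
  set w : ℕ → ℝ := fun n => 1 + ((n : ℝ) + 1 / 2) / b with hw
  have hw0 : ∀ n, 0 < w n := fun n => by simp only [hw]; positivity
  have hpw : HasSum (fun n => p n * w n) (k / (k - 1)) := by
    have := hp.add (hm.mul_right b⁻¹)
    convert this using 1
    · ext n; simp only [hw]; ring
    · rw [hb]; field_simp; ring
  have hconj : (1 / α).HolderConjugate (1 / (1 - α)) := by
    rw [holderConjugate_iff]
    refine ⟨by rw [one_lt_div hα0]; exact hα1, by simp⟩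
  -- Hölder for `p ^ α = (p w) ^ α * w ^ (-α)`.
  have ef : ∀ n, ((p n * w n) ^ α) ^ (1 / α) = p n * w n := fun n => by
    rw [← rpow_mul (mul_nonneg (hp0 n) (hw0 n).le), mul_one_div_cancel hα0.ne', rpow_one]
  have eg : ∀ n, ((w n) ^ (-α)) ^ (1 / (1 - α)) = w n ^ (-k) := fun n => by
    rw [← rpow_mul (hw0 n).le, hk]; congr 1; ring
  have efg : ∀ n, (p n * w n) ^ α * w n ^ (-α) = p n ^ α := fun n => by
    rw [mul_rpow (hp0 n) (hw0 n).le, mul_assoc, ← rpow_add (hw0 n)]; simp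
  have hH := summable_and_inner_le_Lp_mul_Lq_tsum_of_nonneg hconj
    (f := fun n => (p n * w n) ^ α) (g := fun n => w n ^ (-α))
    (fun n => rpow_nonneg (mul_nonneg (hp0 n) (hw0 n).le) _)
    (fun n => rpow_nonneg (hw0 n).le _)
    (by simp only [ef]; exact hpw.summable) (by simp only [eg]; exact hs)
  simp only [ef, eg, efg, hpw.tsum_eq, one_div_one_div] at hH
  obtain ⟨hS, hle⟩ := hH
  have hSpos : 0 < ∑' n, p n ^ α := tsum_rpow_pos hp0 hp hS
  have hbk : b / (k - 1) = m := by rw [hb]; field_simp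
  rw [hbk] at hlt
  have hkk : 0 < k / (k - 1) := by positivity
  have hlt' : ∑' n, p n ^ α < (k / (k - 1)) ^ α * m ^ (1 - α) :=
    hle.trans_lt (mul_lt_mul_of_pos_left
      (rpow_lt_rpow (tsum_nonneg fun n => rpow_nonneg (hw0 n).le _) hlt h1α)
      (rpow_pos_of_pos hkk _))
  have hlog := log_lt_log hSpos hlt'
  rw [log_mul (rpow_pos_of_pos hkk _).ne' (rpow_pos_of_pos hm0 _).ne', log_rpow hkk,
    log_rpow hm0] at hlog
  have hρ : k / (k - 1) = ((2 * α - 1) / α)⁻¹ := by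
    have : 2 * α - 1 ≠ 0 := by linarith
    have h2 : k - 1 = (2 * α - 1) / (1 - α) := by rw [hk]; field_simp; ring
    rw [h2, hk]; field_simp
  rw [hρ, log_inv] at hlog
  refine bound_of_log_lt hα hm0 ?_
  have : α / (1 - α) * log ((2 * α - 1) / α) + 1 / (1 - α) * log (∑' n, p n ^ α)
      = (α * log ((2 * α - 1) / α) + log (∑' n, p n ^ α)) / (1 - α) := by ring
  rw [this, div_lt_iff₀ h1α]
  linarith

/-- The bound for `1 < α`, in terms of `m = G - 1 / 2`. -/
lemma bound_of_one_lt {α : ℝ} (hα1 : 1 < α) {p : ℕ → ℝ} (hp0 : ∀ n, 0 ≤ p n)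
    (hp : HasSum p 1) {m : ℝ} (hm : HasSum (fun n : ℕ => ((n : ℝ) + 1 / 2) * p n) m)
    (hm0 : 1 / 2 ≤ m) :
    ((2 * α - 1) / α) ^ (α / (1 - α)) * exp (1 / (1 - α) * log (∑' n, p n ^ α)) < m := by
  have h1α : 0 < α - 1 := by linarith
  have hα0 : 0 < α := by linarith
  have hmp : 0 < m := by linarith
  set k := α / (α - 1) with hk
  have hk1 : 1 < k := by rw [hk, one_lt_div h1α]; linarith
  -- The scale `b` for which the density proportional to `(max (1 - x / b) 0) ^ (1 / (α - 1))` has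
  -- mean `m`.
  set b := m * (k + 1) with hb
  have hb0 : 1 / 2 < b := by nlinarith
  obtain ⟨hs, hlt⟩ := tsum_midpoint_pos_lt hk1 hb0
  set w : ℕ → ℝ := fun n => 1 - ((n : ℝ) + 1 / 2) / b with hw
  have hpw : HasSum (fun n => p n * w n) (k / (k + 1)) := by
    have hf : (fun n => p n * w n) = fun n : ℕ => p n - ((n : ℝ) + 1 / 2) * p n * b⁻¹ := by
      ext n; simp only [hw]; ring
    have hv : k / (k + 1) = 1 - m * b⁻¹ := by rw [hb]; field_simp; ring
    rw [hf, hv]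
    exact hp.sub (hm.mul_right b⁻¹)
  have hconj : α.HolderConjugate k := by
    rw [holderConjugate_iff]
    exact ⟨hα1, by rw [hk]; field_simp; ring⟩
  have hple : ∀ n, p n ≤ 1 := fun n => le_hasSum hp n fun i _ => hp0 i
  have hS : Summable fun n => p n ^ α :=
    hp.summable.of_nonneg_of_le (fun n => rpow_nonneg (hp0 n) _)
      fun n => rpow_le_self_of_le_one (hp0 n) (hple n) hα1.le
  obtain ⟨hsum, hle⟩ := summable_and_inner_le_Lp_mul_Lq_tsum_of_nonneg hconj
    (f := p) (g := fun n => max (w n) 0) hp0 (fun n => le_max_right _ _) hS hs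
  have hle2 : k / (k + 1) ≤ ∑' n, p n * max (w n) 0 := by
    rw [← hpw.tsum_eq]
    exact hpw.summable.tsum_le_tsum
      (fun n => mul_le_mul_of_nonneg_left (le_max_left _ _) (hp0 n)) hsum
  have hSpos : 0 < ∑' n, p n ^ α := tsum_rpow_pos hp0 hp hS
  have hbk : b / (k + 1) = m := by rw [hb]; field_simp
  rw [hbk] at hlt
  have hkk : 0 < k / (k + 1) := by positivity
  have hlt' : k / (k + 1) < (∑' n, p n ^ α) ^ (1 / α) * m ^ (1 / k) :=
    (hle2.trans hle).trans_lt (mul_lt_mul_of_pos_left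
      (rpow_lt_rpow (tsum_nonneg fun n => rpow_nonneg (le_max_right _ _) _) hlt
        (by positivity)) (rpow_pos_of_pos hSpos _))
  have hlog := log_lt_log hkk hlt'
  rw [log_mul (rpow_pos_of_pos hSpos _).ne' (rpow_pos_of_pos hmp _).ne', log_rpow hSpos,
    log_rpow hmp] at hlog
  have hρ : k / (k + 1) = ((2 * α - 1) / α)⁻¹ := by
    have : 2 * α - 1 ≠ 0 := by linarith
    have h2 : k + 1 = (2 * α - 1) / (α - 1) := by rw [hk]; field_simp; ring
    rw [h2, hk]; field_simp
  rw [hρ, log_inv, hk] at hlog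
  refine bound_of_log_lt (by linarith) hmp ?_
  have h3 : α / (1 - α) * log ((2 * α - 1) / α) + 1 / (1 - α) * log (∑' n, p n ^ α)
      = (-α * log ((2 * α - 1) / α) - log (∑' n, p n ^ α)) / (α - 1) := by
    rw [← neg_sub α 1]; field_simp; ring
  rw [h3, div_lt_iff₀ h1α]
  have h4 := mul_lt_mul_of_pos_left hlog hα0
  have h5 : α * (1 / α * log (∑' n, p n ^ α) + 1 / (α / (α - 1)) * log m)
      = log (∑' n, p n ^ α) + (α - 1) * log m := by field_simp
  rw [h5] at h4
  linarith

/-- Rényi-entropy lower bound on guessing: for `α > 1/2`, `α ≠ 1`, if `X` is a discrete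
random variable whose probabilities arranged in nonincreasing order are `p 0 ≥ p 1 ≥ ⋯`,
with finite guessing entropy `G(X)`, then
`G(X) > ((2α-1)/α)^{α/(1-α)} · e^{H_α(X)} + 1/2`. -/
theorem renyi_guessing_bound
    (α : ℝ) (hα : 1 / 2 < α) (hα1 : α ≠ 1)
    (p : ℕ → ℝ) (hp0 : ∀ n, 0 ≤ p n) (hmono : Antitone p) (hp1 : ∑' n, p n = 1)
    (G : ℝ) (hG : G = ∑' n : ℕ, ((n : ℝ) + 1) * p n)
    (hGs : Summable (fun n : ℕ => ((n : ℝ) + 1) * p n)) :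
    G > ((2 * α - 1) / α) ^ (α / (1 - α))
          * Real.exp ((1 / (1 - α)) * Real.log (∑' n, p n ^ α)) + 1 / 2 := by
  have hps : Summable p := by
    by_contra h
    rw [tsum_eq_zero_of_not_summable h] at hp1
    exact zero_ne_one hp1
  have hp : HasSum p 1 := hp1 ▸ hps.hasSum
  have hm : HasSum (fun n : ℕ => ((n : ℝ) + 1 / 2) * p n) (G - 1 / 2) := by
    have hG' : HasSum (fun n : ℕ => ((n : ℝ) + 1) * p n) G := hG ▸ hGs.hasSum
    have hf : (fun n : ℕ => ((n : ℝ) + 1 / 2) * p n) =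
        fun n : ℕ => ((n : ℝ) + 1) * p n - p n * (1 / 2) := by
      ext n; ring
    have hv : G - 1 / 2 = G - 1 * (1 / 2) := by ring
    rw [hf, hv]
    exact hG'.sub (hp.mul_right (1 / 2))
  have hm0 : 1 / 2 ≤ G - 1 / 2 := by
    rw [← mul_one (1 / 2 : ℝ)]
    refine hasSum_le (fun n => ?_) (hp.mul_left (1 / 2)) (by rwa [mul_one])
    exact mul_le_mul_of_nonneg_right (by linarith [(n.cast_nonneg : (0 : ℝ) ≤ n)]) (hp0 n)
  rw [gt_iff_lt, ← lt_sub_iff_add_lt]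
  rcases lt_or_gt_of_ne hα1 with h | h
  · exact bound_of_lt_one hα h hp0 hp hm (by linarith)
  · exact bound_of_one_lt h hp0 hp hm hm0
end

section
/- Let ρ > 0 and let X be a discrete random variable taking countably many values with finite ρ-th guessing moment G_ρ(X). Then G_ρ(X) > e^{ρH(X)} / ( ρ · (Γ(1 + 1/ρ))^ρ · e ). -/
open MeasureTheory Real

/-!
The bound is Gibbs' inequality against a discretized generalized Gaussian. For `lam > 0` let
`C = ∫₀^∞ exp (-lam x^ρ) dx = lam^(-1/ρ) Γ(1 + 1/ρ)` and `q n = exp (-lam (n+1)^ρ) / C`. Since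
`exp (-lam x^ρ)` is strictly decreasing, comparing the sum with the integral gives `∑ q n < 1`
(`sum_exp_neg_lt`), and summing `p log (1/p) ≤ p log (1/q) + q - p` (`gibbs_term`) gives
`H < lam G + log C`. The choice `lam = 1/(ρ G)` turns this into
`ρ H < 1 + log (ρ G) + ρ log Γ(1 + 1/ρ)`. The same termwise bound shows that the entropy series
converges, so its `tsum` is not a junk value.
-/

/-- Comparison of the series with the integral of `exp (-lam x^ρ)` over `(0, ∞)`, whose value is
the right-hand side; strictness comes from the interval `[0, 1]`. -/
lemma sum_exp_neg_lt (ρ lam : ℝ) (hρ : 0 < ρ) (hlam : 0 < lam) :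
    Summable (fun n : ℕ => Real.exp (-lam * ((n : ℝ) + 1) ^ ρ)) ∧
    ∑' n : ℕ, Real.exp (-lam * ((n : ℝ) + 1) ^ ρ)
      < lam ^ (-1 / ρ) * Real.Gamma (1 / ρ + 1) := by
  set f : ℝ → ℝ := fun x => Real.exp (-lam * x ^ ρ) with hf
  have hcont : Continuous f := by
    have : Continuous fun x : ℝ => x ^ ρ := Real.continuous_rpow_const hρ.le
    fun_prop
  have hval : ∫ x in Set.Ioi (0 : ℝ), f x = lam ^ (-1 / ρ) * Real.Gamma (1 / ρ + 1) :=
    integral_exp_neg_mul_rpow hρ hlam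
  have hC : 0 < lam ^ (-1 / ρ) * Real.Gamma (1 / ρ + 1) := by
    have := Real.Gamma_pos_of_pos (s := 1 / ρ + 1) (by positivity)
    positivity
  have hint : IntegrableOn f (Set.Ioi 0) := by
    -- a non-integrable function would have Bochner integral zero
    by_contra h
    rw [integral_undef h] at hval
    linarith
  have hanti : ∀ x y : ℝ, 0 ≤ x → x ≤ y → f y ≤ f x := by
    intro x y hx hxy
    have := Real.rpow_le_rpow hx hxy hρ.le
    simp only [hf]
    apply Real.exp_le_exp.mpr
    nlinarith
  have hfirst : f 1 < ∫ x in (0 : ℝ)..1, f x := by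
    have h : ∫ x in (0 : ℝ)..1, f 1 < ∫ x in (0 : ℝ)..1, f x := by
      apply intervalIntegral.integral_lt_integral_of_continuousOn_of_le_of_exists_lt
        one_pos continuousOn_const hcont.continuousOn
      · intro x hx
        exact hanti x 1 hx.1.le hx.2
      · refine ⟨0, by simp, ?_⟩
        simp only [hf, Real.zero_rpow hρ.ne', Real.one_rpow]
        apply Real.exp_lt_exp.mpr
        linarith
    simpa using h
  have hpart : ∀ N : ℕ, ∑ n ∈ Finset.range N, f ((n : ℝ) + 1)
      ≤ (∫ x in Set.Ioi (0 : ℝ), f x) - ((∫ x in (0 : ℝ)..1, f x) - f 1) := by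
    intro N
    have hsucc : ∑ n ∈ Finset.range N, f ((n : ℝ) + 1)
        ≤ ∑ n ∈ Finset.range (N + 1), f ((n : ℝ) + 1) := by
      rw [Finset.sum_range_succ]
      have : 0 < f ((N : ℝ) + 1) := Real.exp_pos _
      linarith
    have htail : ∑ n ∈ Finset.range N, f (1 + ((n + 1 : ℕ) : ℝ))
        ≤ ∫ x in (1 : ℝ)..(1 + (N : ℝ)), f x := by
      apply AntitoneOn.sum_le_integral
      intro x hx y _ hxy
      exact hanti x y (by linarith [hx.1]) hxy
    have hadd : (∫ x in (0 : ℝ)..1, f x) + ∫ x in (1 : ℝ)..(1 + (N : ℝ)), f x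
        = ∫ x in (0 : ℝ)..(1 + (N : ℝ)), f x :=
      intervalIntegral.integral_add_adjacent_intervals (hcont.intervalIntegrable _ _)
        (hcont.intervalIntegrable _ _)
    have hle : ∫ x in (0 : ℝ)..(1 + (N : ℝ)), f x ≤ ∫ x in Set.Ioi (0 : ℝ), f x := by
      rw [intervalIntegral.integral_of_le (by positivity)]
      apply setIntegral_mono_set hint
      · exact Filter.Eventually.of_forall fun x => (Real.exp_pos _).le
      · exact Set.Ioc_subset_Ioi_self.eventuallyLE
    rw [Finset.sum_range_succ'] at hsucc
    have heq : ∑ n ∈ Finset.range N, f (((n + 1 : ℕ) : ℝ) + 1)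
        = ∑ n ∈ Finset.range N, f (1 + ((n + 1 : ℕ) : ℝ)) := by
      simp only [add_comm]
    have h0 : f (((0 : ℕ) : ℝ) + 1) = f 1 := by simp
    rw [heq, h0] at hsucc
    linarith
  have hpos : ∀ n : ℕ, 0 ≤ f ((n : ℝ) + 1) := fun n => (Real.exp_pos _).le
  refine ⟨summable_of_sum_range_le hpos hpart, ?_⟩
  have := Real.tsum_le_of_sum_range_le hpos hpart
  rw [hval] at this
  change ∑' n : ℕ, f ((n : ℝ) + 1) < _
  linarith

/-- Termwise Gibbs inequality, written with `q = exp (-a) / C`. -/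
lemma gibbs_term (x a C : ℝ) (hx : 0 ≤ x) (hC : 0 < C) :
    x * Real.log (1 / x) ≤ Real.exp (-a) / C - x + x * (a + Real.log C) := by
  rcases hx.eq_or_lt with rfl | hx
  · simp only [zero_mul, sub_zero, add_zero]
    positivity
  · have h := Real.log_le_sub_one_of_pos (x := Real.exp (-a) / C / x) (by positivity)
    rw [Real.log_div (by positivity) hx.ne', Real.log_div (by positivity) hC.ne',
      Real.log_exp] at h
    have h2 := mul_le_mul_of_nonneg_left h hx.le
    have h3 : x * (Real.exp (-a) / C / x - 1) = Real.exp (-a) / C - x := by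
      field_simp
    rw [h3] at h2
    rw [one_div, Real.log_inv]
    nlinarith

/-- Lower bound on guessing moments: for `ρ > 0`, if `X` is a discrete random variable whose
probabilities arranged in nonincreasing order are `p 0 ≥ p 1 ≥ ⋯`, with finite `ρ`-th
guessing moment `G_ρ(X) = Σ_{k≥1} k^ρ·p_(k)`, then
`G_ρ(X) > e^{ρH(X)} / (ρ·Γ(1+1/ρ)^ρ·e)`. -/
theorem guessing_moment_bound
    (ρ : ℝ) (hρ : 0 < ρ)
    (p : ℕ → ℝ) (hp0 : ∀ n, 0 ≤ p n) (hmono : Antitone p) (hp1 : ∑' n, p n = 1)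
    (Gρ : ℝ) (hGρ : Gρ = ∑' n : ℕ, ((n : ℝ) + 1) ^ ρ * p n)
    (hGρs : Summable (fun n : ℕ => ((n : ℝ) + 1) ^ ρ * p n)) :
    Gρ > Real.exp (ρ * ∑' n, p n * Real.log (1 / p n))
          / (ρ * Real.Gamma (1 + 1 / ρ) ^ ρ * Real.exp 1) := by
  have hps : Summable p := by
    by_contra h
    rw [tsum_eq_zero_of_not_summable h] at hp1
    norm_num at hp1
  have hG : 1 ≤ Gρ := by
    rw [hGρ]
    refine hp1.symm.le.trans (hps.tsum_le_tsum (fun n => ?_) hGρs)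
    have h1 : (1 : ℝ) ≤ ((n : ℝ) + 1) ^ ρ :=
      Real.one_le_rpow (by linarith [n.cast_nonneg (α := ℝ)]) hρ.le
    nlinarith [hp0 n]
  have hG0 : 0 < Gρ := by linarith
  have hΓ : 0 < Real.Gamma (1 + 1 / ρ) := Real.Gamma_pos_of_pos (by positivity)
  -- `1 / (ρ Gρ)` minimizes `lam * Gρ + log C`
  set lam : ℝ := 1 / (ρ * Gρ) with hlamdef
  have hlam : 0 < lam := by positivity
  obtain ⟨hs, hlt⟩ := sum_exp_neg_lt ρ lam hρ hlam
  rw [add_comm (1 / ρ) 1] at hlt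
  set C : ℝ := lam ^ (-1 / ρ) * Real.Gamma (1 + 1 / ρ) with hCdef
  have hC : 0 < C := by positivity
  have hlogC : ρ * Real.log C = Real.log (ρ * Gρ) + ρ * Real.log (Real.Gamma (1 + 1 / ρ)) := by
    rw [hCdef, Real.log_mul (by positivity) hΓ.ne', Real.log_rpow hlam, hlamdef, one_div,
      Real.log_inv]
    field_simp
  have hterm : ∀ n : ℕ, p n * Real.log (1 / p n) ≤
      Real.exp (-lam * ((n : ℝ) + 1) ^ ρ) / C - p n
        + (lam * (((n : ℝ) + 1) ^ ρ * p n) + Real.log C * p n) := by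
    intro n
    have h := gibbs_term (p n) (lam * ((n : ℝ) + 1) ^ ρ) C (hp0 n) hC
    rw [← neg_mul] at h
    linarith
  have hrhs := ((hs.hasSum.div_const C).sub hps.hasSum).add
    ((hGρs.hasSum.mul_left lam).add (hps.hasSum.mul_left (Real.log C)))
  have hHs : Summable fun n => p n * Real.log (1 / p n) := by
    refine Summable.of_nonneg_of_le (fun n => ?_) hterm hrhs.summable
    have hple : p n ≤ 1 := hp1 ▸ hps.le_tsum n fun j _ => hp0 j
    rw [one_div, Real.log_inv]
    have := Real.log_nonpos (hp0 n) hple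
    nlinarith [hp0 n]
  have hle := hasSum_le hterm hHs.hasSum hrhs
  rw [hp1, ← hGρ] at hle
  have hq : (∑' n : ℕ, Real.exp (-lam * ((n : ℝ) + 1) ^ ρ)) / C < 1 := (div_lt_one hC).mpr hlt
  have hH : ∑' n, p n * Real.log (1 / p n) < lam * Gρ + Real.log C := by linarith
  have hlamG : ρ * (lam * Gρ) = 1 := by
    rw [hlamdef]
    field_simp
  have hρH : ρ * ∑' n, p n * Real.log (1 / p n)
      < Real.log (Gρ * (ρ * Real.Gamma (1 + 1 / ρ) ^ ρ * Real.exp 1)) := by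
    have h := mul_lt_mul_of_pos_left hH hρ
    have hlog : Real.log (Gρ * (ρ * Real.Gamma (1 + 1 / ρ) ^ ρ * Real.exp 1))
        = Real.log (ρ * Gρ) + ρ * Real.log (Real.Gamma (1 + 1 / ρ)) + 1 := by
      rw [show Gρ * (ρ * Real.Gamma (1 + 1 / ρ) ^ ρ * Real.exp 1)
          = (ρ * Gρ) * Real.Gamma (1 + 1 / ρ) ^ ρ * Real.exp 1 by ring,
        Real.log_mul (by positivity) (by positivity),
        Real.log_mul (by positivity) (by positivity), Real.log_rpow hΓ, Real.log_exp]
    rw [hlog]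
    linarith
  rw [gt_iff_lt, div_lt_iff₀ (by positivity)]
  exact (Real.lt_log_iff_exp_lt (by positivity)).mp hρH
end
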